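/- Fix n, d ∈ ℕ, 1 ≤ p < ∞, x ∈ ℝ^n, and smooth vector fields X_1, …, X_d : ℝ^n → ℝ^n that are bounded, have bounded first derivatives, and are bracket generating. Let F : L^p([0,1], ℝ^d) → ℝ^n be the endpoint map F(u) = γ_u(1), where γ_u is the trajectory of u starting at x. Then F is a Hurewicz fibration: for every topological space Z, every continuous map g : Z × [0,1] → ℝ^n, and every continuous map g̃_0 : Z → L^p([0,1], ℝ^d) with F(g̃_0(z)) = g(z,0) for all z ∈ Z, there exists a continuous map g̃ : Z × [0,1] → L^p([0,1], ℝ^d) such that g̃(z,0) = g̃_0(z) and F(g̃(z,s)) = g(z,s) for all (z,s) ∈ Z × [0,1]. -/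

import Mathlib

open MeasureTheory Set Filter Topology

noncomputable section

/-- The Lie bracket of two (smooth) vector fields on `ℝⁿ`:
`[Y,Z](x) = DZ(x)Y(x) − DY(x)Z(x)`. -/
def lieBracketVF {n : ℕ}
    (Y Z : EuclideanSpace ℝ (Fin n) → EuclideanSpace ℝ (Fin n)) :
    EuclideanSpace ℝ (Fin n) → EuclideanSpace ℝ (Fin n) :=
  fun x => fderiv ℝ Z x (Y x) - fderiv ℝ Y x (Z x)

/-- The iterated Lie brackets of the family `X₁, …, X_d`. -/
inductive IsIteratedBracket {n d : ℕ}
    (X : Fin d → EuclideanSpace ℝ (Fin n) → EuclideanSpace ℝ (Fin n)) :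
    (EuclideanSpace ℝ (Fin n) → EuclideanSpace ℝ (Fin n)) → Prop
  | base (i : Fin d) : IsIteratedBracket X (X i)
  | bracket (Y Z : EuclideanSpace ℝ (Fin n) → EuclideanSpace ℝ (Fin n)) :
      IsIteratedBracket X Y → IsIteratedBracket X Z →
      IsIteratedBracket X (lieBracketVF Y Z)

/-- The family `X₁, …, X_d` is bracket generating. -/
def BracketGenerating {n d : ℕ}
    (X : Fin d → EuclideanSpace ℝ (Fin n) → EuclideanSpace ℝ (Fin n)) : Prop :=
  ∀ x : EuclideanSpace ℝ (Fin n),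
    Submodule.span ℝ {v | ∃ Y, IsIteratedBracket X Y ∧ Y x = v} = ⊤

/-- Trajectory on `[0,1]` of a control `u` starting at `x` for the (driftless) control
system determined by `X₁, …, X_d`. -/
def IsTrajectory {n d : ℕ}
    (X : Fin d → EuclideanSpace ℝ (Fin n) → EuclideanSpace ℝ (Fin n))
    (x : EuclideanSpace ℝ (Fin n))
    (u : ℝ → EuclideanSpace ℝ (Fin d))
    (γ : ℝ → EuclideanSpace ℝ (Fin n)) : Prop :=
  ContinuousOn γ (Set.Icc 0 1) ∧
    ∀ t ∈ Set.Icc (0:ℝ) 1,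
      γ t = x + ∫ s in (0:ℝ)..t, ∑ i, u s i • X i (γ s)

/-!
Running a control and then a constant control, compressed to the unit interval, shows that the flow
of each `X i` lifts through the endpoint map `F` to a family of self-maps of the space of controls,
continuous in all variables and equal to the identity at time `0`. Compositions of liftable flows
are liftable, so the group commutators of such flows are too, and these are curves of
diffeomorphisms whose leading term is an iterated Lie bracket. After a reparametrization by signed
roots they become `C¹` families with that bracket as derivative; since the brackets span, composing
`n` of them and applying the inverse function theorem gives, near each point `y`, a continuous rule
`Λ` that turns any control `u` ending near `y` into a control `Λ (u, F u, y')` ending at a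
prescribed nearby `y'`, with `Λ (u, y, y) = u` whenever `F u = y`. A partition of unity glues these
local rules into one defined on a neighbourhood of the diagonal of `ℝⁿ × ℝⁿ`. A homotopy is then
lifted by applying the rule along it in small time steps; the step size can be chosen continuously
in the path `g (z, ·)`, and locally in `z` only finitely many steps are not trivial.
-/

section

open scoped ContDiff unitInterval

/-! ### Superposition operators on spaces of continuous maps -/

section Superposition

universe u

variable {K : Type*} [TopologicalSpace K] [CompactSpace K]
  {E F : Type u} [NormedAddCommGroup E] [NormedSpace ℝ E] [NormedAddCommGroup F] [NormedSpace ℝ F]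

/-- The pairing `(A, h) ↦ (t ↦ A t (h t))` of a continuous family of operators with a continuous
map, as a bounded bilinear map; it carries the derivative of a superposition operator. -/
def pointwiseApply (K : Type*) [TopologicalSpace K] [CompactSpace K] (E F : Type*)
    [NormedAddCommGroup E] [NormedSpace ℝ E] [NormedAddCommGroup F] [NormedSpace ℝ F] :
    C(K, E →L[ℝ] F) →L[ℝ] C(K, E) →L[ℝ] C(K, F) :=
  LinearMap.mkContinuous₂
    (LinearMap.mk₂ ℝ (fun (A : C(K, E →L[ℝ] F)) (h : C(K, E)) =>
        (⟨fun t => A t (h t), by fun_prop⟩ : C(K, F)))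
      (by intros; ext; simp) (by intros; ext; simp) (by intros; ext; simp)
      (by intros; ext; simp)) 1 fun A h => by
    refine (ContinuousMap.norm_le _ (by positivity)).2 fun t => ?_
    rw [one_mul]
    exact (A t).le_of_opNorm_le_of_le (A.norm_coe_le_norm t) (h.norm_coe_le_norm t)

lemma hasFDerivAt_superposition {f : C(E, F)} {f' : C(E, E →L[ℝ] F)}
    (hf : ∀ v, HasFDerivAt f (f' v) v) (γ : C(K, E)) :
    HasFDerivAt (fun γ : C(K, E) => f.comp γ) (pointwiseApply K E F (f'.comp γ)) γ := by
  refine .of_isLittleO (Asymptotics.isLittleO_iff.2 fun c hc => ?_)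
  have hcont : ContinuousAt (fun γ : C(K, E) => f'.comp γ) γ :=
    (ContinuousMap.continuous_postcomp f').continuousAt
  obtain ⟨δ, hδ, hball⟩ := (Metric.continuousAt_iff (α := C(K, E))
    (β := C(K, E →L[ℝ] F)) (f := fun γ => f'.comp γ)).1 hcont c hc
  filter_upwards [Metric.ball_mem_nhds γ hδ] with γ' hγ'
  have derivative_close : ∀ t, ∀ v ∈ Metric.ball (γ t) δ, ‖f' v - f' (γ t)‖ ≤ c := by
    intro t v hv
    have hshift : dist (γ + ContinuousMap.const K (v - γ t)) γ < δ := by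
      rw [dist_eq_norm, add_sub_cancel_left]
      refine ((ContinuousMap.norm_le _ (norm_nonneg (v - γ t))).2 fun _ => le_rfl).trans_lt ?_
      simpa [dist_eq_norm] using hv
    simpa [dist_eq_norm] using
      (ContinuousMap.dist_apply_le_dist t).trans (hball hshift).le
  refine (ContinuousMap.norm_le _ (by positivity)).2 fun t => ?_
  have hdist : ‖γ' t - γ t‖ ≤ ‖γ' - γ‖ := (γ' - γ).norm_coe_le_norm t
  calc ‖f (γ' t) - f (γ t) - f' (γ t) (γ' t - γ t)‖
      ≤ c * ‖γ' t - γ t‖ :=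
        (convex_ball (γ t) δ).norm_image_sub_le_of_norm_hasFDerivWithin_le'
          (fun v _ => (hf v).hasFDerivWithinAt) (derivative_close t) (Metric.mem_ball_self hδ)
          (by simpa [dist_eq_norm] using hdist.trans_lt (by simpa [dist_eq_norm] using hγ'))
    _ ≤ c * ‖γ' - γ‖ := by gcongr

lemma contDiff_superposition_natCast (m : ℕ) {F : Type u} [NormedAddCommGroup F]
    [NormedSpace ℝ F] {f : C(E, F)} (hf : ContDiff ℝ m f) :
    ContDiff ℝ m (fun γ : C(K, E) => f.comp γ) := by
  induction m generalizing F with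
  | zero => exact contDiff_zero.2 (ContinuousMap.continuous_postcomp f)
  | succ m ih =>
    obtain ⟨f', hf', hd⟩ := contDiff_succ_iff_hasFDerivAt.1 (by exact_mod_cast hf)
    push_cast
    let g : C(E, E →L[ℝ] F) := ⟨f', hf'.continuous⟩
    have hg : ContDiff ℝ m fun γ : C(K, E) => pointwiseApply K E F (g.comp γ) :=
      (pointwiseApply K E F).contDiff.fun_comp (ih (f := g) hf')
    exact contDiff_succ_iff_hasFDerivAt.2 ⟨_, hg, hasFDerivAt_superposition hd⟩

lemma contDiff_superposition {f : C(E, F)} (hf : ContDiff ℝ ∞ f) :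
    ContDiff ℝ ∞ (fun γ : C(K, E) => f.comp γ) :=
  contDiff_infty.2 fun m => contDiff_superposition_natCast m (contDiff_infty.1 hf m)

end Superposition

section Primitive

variable {F : Type*} [NormedAddCommGroup F] [NormedSpace ℝ F]

/-- The operator `γ ↦ (t ↦ ∫₀ᵗ γ)` on continuous maps on the unit interval. Since `γ` only lives on
the unit interval, the integrand is its extension by constants. -/
def primitive (F : Type*) [NormedAddCommGroup F] [NormedSpace ℝ F] : C(I, F) →L[ℝ] C(I, F) :=
  LinearMap.mkContinuous
    { toFun γ := ⟨fun t => ∫ s in (0 : ℝ)..t, IccExtend zero_le_one γ s,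
        (intervalIntegral.continuous_primitive
          (fun _ _ => γ.continuous.Icc_extend'.intervalIntegrable _ _) 0).comp
          continuous_subtype_val⟩
      map_add' γ γ' := by
        ext t
        exact intervalIntegral.integral_add (γ.continuous.Icc_extend'.intervalIntegrable _ _)
          (γ'.continuous.Icc_extend'.intervalIntegrable _ _)
      map_smul' c γ := by
        ext t
        exact intervalIntegral.integral_smul c _ } 1 fun γ => by
    refine (ContinuousMap.norm_le _ (by positivity)).2 fun t => ?_
    refine (intervalIntegral.norm_integral_le_of_norm_le_const
      (fun s _ => γ.norm_coe_le_norm _)).trans ?_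
    rw [sub_zero, abs_of_nonneg t.2.1, one_mul]
    exact mul_le_of_le_one_right (norm_nonneg _) t.2.2

lemma primitive_apply (γ : C(I, F)) (t : I) :
    primitive F γ t = ∫ s in (0 : ℝ)..t, IccExtend zero_le_one γ s := rfl

lemma norm_primitive_le : ‖primitive F‖ ≤ 1 :=
  LinearMap.mkContinuous_norm_le _ zero_le_one _

end Primitive

/-! ### Hadamard's lemma -/

section Hadamard

universe u

variable {E F : Type u} [NormedAddCommGroup E] [NormedSpace ℝ E]
  [NormedAddCommGroup F] [NormedSpace ℝ F]

lemma contDiff_integral_comp_mul {D : ℝ × E → F} (hD : ContDiff ℝ ∞ D) :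
    ContDiff ℝ ∞ fun q : ℝ × E => ∫ r in (0 : ℝ)..1, D (r * q.1, q.2) := by
  let segment : ℝ × E →L[ℝ] C(I, ℝ × E) := LinearMap.mkContinuous
    { toFun q := ⟨fun t => (t * q.1, q.2), by fun_prop⟩
      map_add' a b := by ext t <;> simp [mul_add]
      map_smul' c a := by ext t <;> simp [mul_left_comm] } 1 fun q => by
    refine (ContinuousMap.norm_le _ (by positivity)).2 fun t => ?_
    rw [one_mul]
    refine max_le_max ?_ le_rfl
    calc ‖t * q.1‖ = t * ‖q.1‖ := by rw [norm_mul, Real.norm_of_nonneg t.2.1]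
      _ ≤ ‖q.1‖ := mul_le_of_le_one_left (norm_nonneg _) t.2.2
  let Dc : C(ℝ × E, F) := ⟨D, hD.continuous⟩
  have hcomp : ContDiff ℝ ∞ fun q => Dc.comp (segment q) :=
    (contDiff_superposition (f := Dc) hD).comp segment.contDiff
  have hsuper : ContDiff ℝ ∞ fun q => primitive F (Dc.comp (segment q)) 1 :=
    (ContinuousMap.evalCLM ℝ (1 : I) : C(I, F) →L[ℝ] F).contDiff.comp
      ((primitive F).contDiff.comp hcomp)
  convert hsuper using 2 with q
  refine intervalIntegral.integral_congr fun r hr => ?_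
  rw [uIcc_of_le zero_le_one] at hr
  simp only [IccExtend_of_mem zero_le_one _ hr]
  rfl

lemma exists_contDiff_eq_smul [CompleteSpace F] {f : ℝ × E → F} (hf : ContDiff ℝ ∞ f)
    (hf₀ : ∀ y, f (0, y) = 0) :
    ∃ g : ℝ × E → F, ContDiff ℝ ∞ g ∧ (∀ s y, f (s, y) = s • g (s, y)) ∧
      ∀ y, g (0, y) = fderiv ℝ f (0, y) (1, 0) := by
  have hD : ContDiff ℝ ∞ fun q => fderiv ℝ f q (1, 0) :=
    (hf.fderiv_right (by simp)).clm_apply contDiff_const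
  refine ⟨_, contDiff_integral_comp_mul hD, fun s y => ?_, fun y => by simp⟩
  have hderiv (r : ℝ) :
      HasDerivAt (fun r : ℝ => f (r * s, y)) (s • fderiv ℝ f (r * s, y) (1, 0)) r := by
    have h := (hf.differentiable (by simp) (r * s, y)).hasFDerivAt.comp_hasDerivAt r
      (((hasDerivAt_id r).mul_const s).prodMk (hasDerivAt_const r y))
    rw [← map_smul]
    simpa [Function.comp_def] using h
  have hcont : Continuous fun r : ℝ => s • fderiv ℝ f (r * s, y) (1, 0) :=
    (hD.continuous.comp (by fun_prop : Continuous fun r : ℝ => (r * s, y))).const_smul s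
  have hint := intervalIntegral.integral_eq_sub_of_hasDerivAt (fun r _ => hderiv r)
    (hcont.intervalIntegrable 0 1)
  simpa [hf₀] using hint.symm

lemma exists_contDiff_add_smul_eq [CompleteSpace F] {R : ℝ × E → F} (hR : ContDiff ℝ ∞ R) :
    ∃ r : ℝ × (ℝ × E × E) → F, ContDiff ℝ ∞ r ∧
      (∀ ς s z v, R (s, z + ς • v) = R (s, z) + ς • r (ς, s, z, v)) ∧
      ∀ s z v, r (0, s, z, v) = fderiv ℝ (fun z => R (s, z)) z v := by
  let f : ℝ × (ℝ × E × E) → F := fun q =>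
    R (q.2.1, q.2.2.1 + q.1 • q.2.2.2) - R (q.2.1, q.2.2.1)
  have hf : ContDiff ℝ ∞ f := by fun_prop
  obtain ⟨r, hr, hfr, hr₀⟩ := exists_contDiff_eq_smul hf (by simp [f])
  refine ⟨r, hr, fun ς s z v => by rw [← hfr]; simp [f], fun s z v => ?_⟩
  have hd := (hf.differentiable (by simp) (0, s, z, v)).hasFDerivAt.comp_hasDerivAt (0 : ℝ)
      ((hasDerivAt_id (0 : ℝ)).prodMk (hasDerivAt_const 0 (s, z, v)))
  have hslice : HasFDerivAt (fun z => R (s, z)) (fderiv ℝ (fun z => R (s, z)) z)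
      (z + (0 : ℝ) • v) := by
    have hRs : ContDiff ℝ ∞ (fun z => R (s, z)) := by fun_prop
    simpa using (hRs.differentiable (by simp) z).hasFDerivAt
  have hline : HasDerivAt (fun ς : ℝ => z + ς • v) v 0 := by
    simpa using ((hasDerivAt_id (0 : ℝ)).smul_const v).const_add z
  have hd' := (hslice.comp_hasDerivAt (0 : ℝ) hline).sub_const (R (s, z))
  rw [hr₀]
  exact hd.unique hd'

end Hadamard

/-! ### Flows of globally Lipschitz smooth vector fields -/

section FixedPoint

variable {A B : Type*} [NormedAddCommGroup A] [NormedSpace ℝ A]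
  [NormedAddCommGroup B] [NormedSpace ℝ B] [CompleteSpace B]

lemma isInvertible_fderiv_sub_of_contractingWith {Φ : A × B → B} {K : NNReal} {z : A × B}
    (hΦ : DifferentiableAt ℝ Φ z) (hc : ContractingWith K fun b => Φ (z.1, b)) :
    (fderiv ℝ (fun z => z.2 - Φ z) z ∘L .inr ℝ A B).IsInvertible := by
  set M := fderiv ℝ Φ z ∘L .inr ℝ A B
  have hslice : HasFDerivAt (fun b => Φ (z.1, b)) M z.2 :=
    hΦ.hasFDerivAt.comp z.2 (hasFDerivAt_prodMk_right z.1 z.2)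
  have hnorm : ‖M‖ < 1 :=
    (hslice.le_of_lipschitz hc.2).trans_lt (by exact_mod_cast hc.1)
  have heq : fderiv ℝ (fun z => z.2 - Φ z) z ∘L .inr ℝ A B = 1 - M := by
    rw [(hasFDerivAt_snd.fun_sub hΦ.hasFDerivAt).fderiv, ContinuousLinearMap.sub_comp]
    rfl
  rw [heq]
  exact ⟨ContinuousLinearEquiv.unitsEquiv ℝ _ (Units.oneSub M hnorm), rfl⟩

lemma contDiff_of_isFixedPt [CompleteSpace A] {n : WithTop ℕ∞} {Φ : A × B → B} {K : NNReal}
    {γ : A → B} (hΦ : ContDiff ℝ n Φ) (hn : n ≠ 0)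
    (hc : ∀ a, ContractingWith K fun b => Φ (a, b))
    (hγ : ∀ a, Function.IsFixedPt (fun b => Φ (a, b)) (γ a)) : ContDiff ℝ n γ := by
  refine contDiff_iff_contDiffAt.2 fun a => ?_
  have hf : ContDiffAt ℝ n (fun z => z.2 - Φ z) (a, γ a) := (contDiff_snd.sub hΦ).contDiffAt
  have hinv := isInvertible_fderiv_sub_of_contractingWith (z := (a, γ a))
    (hΦ.differentiable hn _) (hc a)
  refine (hf.contDiffAt_implicitFunction hn hinv).congr_of_eventuallyEq ?_
  filter_upwards [hf.eventually_apply_implicitFunction hn hinv] with a' ha'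
  rw [(hγ a).eq, sub_self, sub_eq_zero] at ha'
  exact (hc a').fixedPoint_unique' (hγ a') ha'.symm

end FixedPoint

section Flow

variable {V : Type*} [NormedAddCommGroup V] [NormedSpace ℝ V]

/-- The Picard operator `γ ↦ (t ↦ y + a ∫₀ᵗ X (γ s) ds)`, whose fixed points are the integral
curves of `a • X` on the unit interval that start at `y`. -/
def picardMap (X : C(V, V)) (a : ℝ) (y : V) (γ : C(I, V)) : C(I, V) :=
  ContinuousMap.const I y + a • primitive V (X.comp γ)

lemma picardMap_apply (X : C(V, V)) (a : ℝ) (y : V) (γ : C(I, V)) (t : I) :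
    picardMap X a y γ t = y + a • ∫ s in (0 : ℝ)..t, X (IccExtend zero_le_one γ s) := rfl

lemma contractingWith_picardMap {X : C(V, V)} {K : NNReal} (hX : LipschitzWith K X) {a : ℝ}
    (ha : |a| * K ≤ 1 / 2) (y : V) : ContractingWith (1 / 2) (picardMap X a y) := by
  refine ⟨NNReal.half_lt_self one_ne_zero, LipschitzWith.of_dist_le_mul fun γ γ' => ?_⟩
  have hcomp : ‖X.comp γ - X.comp γ'‖ ≤ K * ‖γ - γ'‖ :=
    (ContinuousMap.norm_le _ (by positivity)).2 fun t =>
      (hX.norm_sub_le (γ t) (γ' t)).trans (by gcongr; exact (γ - γ').norm_coe_le_norm t)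
  have hprim : ‖primitive V (X.comp γ - X.comp γ')‖ ≤ 1 * ‖X.comp γ - X.comp γ'‖ :=
    (primitive V).le_of_opNorm_le norm_primitive_le _
  calc dist (picardMap X a y γ) (picardMap X a y γ')
      = |a| * ‖primitive V (X.comp γ - X.comp γ')‖ := by
        rw [dist_eq_norm, picardMap, picardMap, add_sub_add_left_eq_sub, ← smul_sub, ← map_sub,
          norm_smul, Real.norm_eq_abs]
    _ ≤ |a| * (1 * (K * ‖γ - γ'‖)) := by gcongr; exact hprim.trans (by gcongr)
    _ = |a| * K * ‖γ - γ'‖ := by ring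
    _ ≤ 1 / 2 * ‖γ - γ'‖ := by gcongr
    _ = (1 / 2 : NNReal) * dist γ γ' := by rw [dist_eq_norm]; simp

lemma contDiff_picardMap {X : C(V, V)} (hX : ContDiff ℝ ∞ X) :
    ContDiff ℝ ∞ fun z : (ℝ × V) × C(I, V) => picardMap X z.1.1 z.1.2 z.2 := by
  have hconst : ContDiff ℝ ∞ fun y : V => ContinuousMap.const I y :=
    (LinearMap.mkContinuous
      { toFun := fun y : V => ContinuousMap.const I y
        map_add' := fun _ _ => rfl
        map_smul' := fun _ _ => rfl } 1 fun y => by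
      simpa using (ContinuousMap.norm_le _ (norm_nonneg y)).2 fun _ => le_rfl).contDiff
  have hprim : ContDiff ℝ ∞ fun γ : C(I, V) => primitive V (X.comp γ) :=
    (primitive V).contDiff.comp (contDiff_superposition hX)
  exact (hconst.comp contDiff_fst.snd).add (contDiff_fst.fst.smul (hprim.comp contDiff_snd))

lemma isFixedPt_picardMap_symm {X : C(V, V)} {a : ℝ} {y : V} {γ : C(I, V)}
    (hγ : Function.IsFixedPt (picardMap X a y) γ) :
    Function.IsFixedPt (picardMap X (-a) (γ 1)) (γ.comp ⟨σ, by fun_prop⟩) := by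
  let f : ℝ → V := fun s => X (IccExtend zero_le_one γ s)
  have hf (b c : ℝ) : IntervalIntegrable f volume b c :=
    (X.continuous.comp γ.continuous.Icc_extend').intervalIntegrable b c
  have hγ_apply (t : I) : γ t = y + a • ∫ s in (0 : ℝ)..t, f s := by
    conv_lhs => rw [← hγ.eq, picardMap_apply]
  ext t
  have hsymm : ∫ s in (0 : ℝ)..t, X (IccExtend zero_le_one (γ.comp ⟨σ, by fun_prop⟩) s) =
      (∫ s in (0 : ℝ)..1, f s) - ∫ s in (0 : ℝ)..(1 - t), f s := by
    rw [intervalIntegral.integral_interval_sub_left (hf _ _) (hf _ _)]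
    simpa [f, IccExtend, unitInterval.symm_projIcc] using
      intervalIntegral.integral_comp_sub_left (a := 0) (b := t) f 1
  rw [picardMap_apply, hsymm, hγ_apply 1, ContinuousMap.comp_apply, hγ_apply]
  simp only [Icc.coe_one, ContinuousMap.coe_mk, unitInterval.coe_symm_eq, neg_smul, smul_sub]
  abel

lemma exists_contDiff_isFixedPt_picardMap [CompleteSpace V] {X : C(V, V)} (hX : ContDiff ℝ ∞ X)
    {K : NNReal} (hXK : LipschitzWith K X) {a : ℝ → ℝ} (ha : ContDiff ℝ ∞ a)
    (haK : ∀ s, |a s| * K ≤ 1 / 2) :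
    ∃ Γ : ℝ × V → C(I, V), ContDiff ℝ ∞ Γ ∧
      ∀ q, Function.IsFixedPt (picardMap X (a q.1) q.2) (Γ q) := by
  have hc (q : ℝ × V) := contractingWith_picardMap hXK (haK q.1) q.2
  have hsmooth : ContDiff ℝ ∞ fun z : (ℝ × V) × C(I, V) => picardMap X (a z.1.1) z.1.2 z.2 :=
    (contDiff_picardMap hX).comp (by fun_prop : ContDiff ℝ ∞
      fun z : (ℝ × V) × C(I, V) => ((a z.1.1, z.1.2), z.2))
  exact ⟨fun q => (hc q).fixedPoint, contDiff_of_isFixedPt hsmooth (by simp) hc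
    fun q => (hc q).fixedPoint_isFixedPt, fun q => (hc q).fixedPoint_isFixedPt⟩

end Flow

/-! ### Families of diffeomorphisms and their leading fields -/

section LeadingField

variable {V : Type*} [NormedAddCommGroup V] [NormedSpace ℝ V]

/-- A smooth one-parameter family `P` of diffeomorphisms, with inverses `P'`, whose displacement
`P (s, y) - y` vanishes to order `k` at `s = 0` with leading coefficient `Y`. -/
structure HasLeadingField (k : ℕ) (Y : V → V) (P P' : ℝ × V → V) : Prop where
  order_ne_zero : k ≠ 0
  contDiff : ContDiff ℝ ∞ P
  contDiff_inverse : ContDiff ℝ ∞ P'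
  leftInverse : ∀ s y, P' (s, P (s, y)) = y
  rightInverse : ∀ s y, P (s, P' (s, y)) = y
  exists_expansion : ∃ A : ℝ × V → V, ContDiff ℝ ∞ A ∧
    (∀ s y, P (s, y) = y + s ^ k • A (s, y)) ∧ ∀ y, A (0, y) = Y y

namespace HasLeadingField

variable {k l : ℕ} {Y Z : V → V} {P P' Q Q' : ℝ × V → V}

lemma apply_zero (h : HasLeadingField k Y P P') (y : V) : P (0, y) = y := by
  obtain ⟨A, -, hPA, -⟩ := h.exists_expansion
  rw [hPA, zero_pow h.order_ne_zero, zero_smul, add_zero]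

lemma inverse_apply_zero (h : HasLeadingField k Y P P') (y : V) : P' (0, y) = y := by
  simpa only [h.apply_zero] using h.leftInverse 0 y

lemma exists_comp_eq_add_lieBracket [CompleteSpace V] (hP : HasLeadingField k Y P P')
    (hQ : HasLeadingField l Z Q Q') :
    ∃ D : ℝ × V → V, ContDiff ℝ ∞ D ∧
      (∀ s y, Q (s, P (s, y)) = P (s, Q (s, y)) + s ^ (k + l) • D (s, y)) ∧
      ∀ y, D (0, y) = VectorField.lieBracket ℝ Y Z y := by
  obtain ⟨A, hA, hPA, hA₀⟩ := hP.exists_expansion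
  obtain ⟨B, hB, hQB, hB₀⟩ := hQ.exists_expansion
  obtain ⟨a, ha, hAa, ha₀⟩ := exists_contDiff_add_smul_eq hA
  obtain ⟨b, hb, hBb, hb₀⟩ := exists_contDiff_add_smul_eq hB
  refine ⟨fun q => b (q.1 ^ k, q.1, q.2, A q) - a (q.1 ^ l, q.1, q.2, B q), by fun_prop,
    fun s y => ?_, fun y => ?_⟩
  · rw [hQB s (P (s, y)), hPA s (Q (s, y)), hPA s y, hQB s y, hBb, hAa]
    module
  · simp only [zero_pow hP.order_ne_zero, zero_pow hQ.order_ne_zero, hb₀, ha₀, hA₀, hB₀,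
      VectorField.lieBracket]

-- The two orders of composition differ by `s ^ (k + l)` times the Lie bracket; undoing the
-- second order leaves only this defect.
lemma commutator [CompleteSpace V] (hP : HasLeadingField k Y P P')
    (hQ : HasLeadingField l Z Q Q') :
    HasLeadingField (k + l) (VectorField.lieBracket ℝ Y Z)
      (fun q => Q' (q.1, P' (q.1, Q (q.1, P q)))) (fun q => P' (q.1, Q' (q.1, P (q.1, Q q)))) := by
  have := hP.contDiff
  have := hP.contDiff_inverse
  have := hQ.contDiff
  have := hQ.contDiff_inverse
  have hkl : k + l ≠ 0 := by simp [hP.order_ne_zero]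
  obtain ⟨D, hD, hQP, hD₀⟩ := hP.exists_comp_eq_add_lieBracket hQ
  let R : ℝ × V → V := fun q => Q' (q.1, P' q)
  have hR₀ : (fun z => R (0, z)) = id := by
    ext z
    simp only [R, hP.inverse_apply_zero, hQ.inverse_apply_zero, id]
  obtain ⟨r, hr, hRr, hr₀⟩ := exists_contDiff_add_smul_eq (R := R) (by fun_prop)
  refine ⟨hkl, by fun_prop, by fun_prop, fun s y => ?_, fun s y => ?_,
    fun q => r (q.1 ^ (k + l), q.1, P (q.1, Q q), D q), by fun_prop, fun s y => ?_, fun y => ?_⟩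
  · simp only [hQ.rightInverse, hP.rightInverse, hQ.leftInverse, hP.leftInverse]
  · simp only [hQ.rightInverse, hP.rightInverse, hQ.leftInverse, hP.leftInverse]
  · rw [hQP]
    simpa only [R, hP.leftInverse, hQ.leftInverse] using
      hRr (s ^ (k + l)) s (P (s, Q (s, y))) (D (s, y))
  · simp only [zero_pow hkl, hr₀, hR₀, fderiv_id, ContinuousLinearMap.id_apply, hD₀]

end HasLeadingField

lemma hasLeadingField_flow [CompleteSpace V] {X : C(V, V)} (hX : ContDiff ℝ ∞ X) {K : NNReal}
    (hXK : LipschitzWith K X) {k : ℕ} (hk : k ≠ 0) {m : ℝ → ℝ} (hm : ContDiff ℝ ∞ m)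
    (hm₀ : m 0 = 1) (hodd : ∀ s, (-s) ^ k * m (-s) = -(s ^ k * m s))
    (hmK : ∀ s, |s ^ k * m s| * K ≤ 1 / 2) {Γ : ℝ × V → C(I, V)} (hΓ : ContDiff ℝ ∞ Γ)
    (hfix : ∀ q, Function.IsFixedPt (picardMap X (q.1 ^ k * m q.1) q.2) (Γ q)) :
    HasLeadingField k X (fun q => Γ q 1) (fun q => Γ (-q.1, q.2) 1) := by
  have hΓ_apply (q : ℝ × V) (t : I) :
      Γ q t = q.2 + (q.1 ^ k * m q.1) • primitive V (X.comp (Γ q)) t := by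
    conv_lhs => rw [← (hfix q).eq]
    rfl
  have heval : ContDiff ℝ ∞ fun γ : C(I, V) => γ 1 :=
    (ContinuousMap.evalCLM ℝ (1 : I) : C(I, V) →L[ℝ] V).contDiff
  have hprim : ContDiff ℝ ∞ fun q => primitive V (X.comp (Γ q)) 1 :=
    heval.comp ((primitive V).contDiff.comp ((contDiff_superposition hX).comp hΓ))
  have hreverse (s : ℝ) (y : V) : Γ (-s, Γ (s, y) 1) 1 = y := by
    have hsymm := isFixedPt_picardMap_symm (hfix (s, y))
    rw [← hodd] at hsymm
    rw [(contractingWith_picardMap hXK (hmK (-s)) _).fixedPoint_unique' (hfix (-s, Γ (s, y) 1))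
      hsymm, ContinuousMap.comp_apply, hΓ_apply]
    simp [primitive_apply]
  have hΓ₀ (y : V) (t : I) : Γ (0, y) t = y := by
    rw [hΓ_apply, zero_pow hk, zero_mul, zero_smul, add_zero]
  refine ⟨hk, heval.comp hΓ, heval.comp (hΓ.comp (by fun_prop)), hreverse, fun s y => ?_,
    fun q => m q.1 • primitive V (X.comp (Γ q)) 1, by fun_prop, fun s y => ?_, fun y => ?_⟩
  · simpa only [neg_neg] using hreverse (-s) y
  · rw [hΓ_apply, smul_smul]
  · simp [primitive_apply, IccExtend, hΓ₀, hm₀]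

lemma exists_bounded_time_change (K : NNReal) :
    ∃ m : ℝ → ℝ, ContDiff ℝ ∞ m ∧ m 0 = 1 ∧ (∀ s, m (-s) = m s) ∧
      ∀ s, |s ^ 3 * m s| * K ≤ 1 / 2 := by
  have hpos (s : ℝ) : 0 < 1 + ((1 + 2 * K) * s) ^ 4 := by positivity
  refine ⟨fun s => (1 + ((1 + 2 * K) * s) ^ 4)⁻¹,
    ContDiff.inv (by fun_prop) fun s => (hpos s).ne', by simp, fun s => ?_, fun s => ?_⟩
  · simp [Even.neg_pow (by decide : Even 4)]
  · set w : ℝ := (1 + 2 * K) * |s| with hw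
    have hK : (2 * K : ℝ) ≤ (1 + 2 * K) ^ 3 :=
      (le_add_of_nonneg_left zero_le_one).trans (le_self_pow₀ (by simp) three_ne_zero)
    have hcube : 2 * K * |s| ^ 3 ≤ w ^ 3 := by rw [hw, mul_pow]; gcongr
    have hquart : w ^ 3 ≤ 1 + w ^ 4 := by
      have : 0 ≤ w := by positivity
      nlinarith [sq_nonneg (w ^ 2 - w), sq_nonneg (w ^ 2 - 1), sq_nonneg (w - 1)]
    have hw4 : ((1 + 2 * K) * s) ^ 4 = w ^ 4 := by
      rw [hw, mul_pow, mul_pow, Even.pow_abs (by decide : Even 4)]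
    rw [abs_mul, abs_pow, abs_inv, abs_of_pos (hpos s), hw4, ← div_eq_mul_inv,
      div_mul_eq_mul_div, div_le_iff₀ (by positivity)]
    linarith

end LeadingField

/-! ### Strict differentiability of root-reparametrized families -/

section Root

variable {V W : Type*} [NormedAddCommGroup V] [NormedAddCommGroup W] [NormedSpace ℝ W]

/-- The `k`-th root of `|t|`, the parameter change that makes a displacement of order `k` linear. -/
def absRoot (k : ℕ) (t : ℝ) : ℝ := |t| ^ (k : ℝ)⁻¹

lemma absRoot_nonneg (k : ℕ) (t : ℝ) : 0 ≤ absRoot k t := Real.rpow_nonneg (abs_nonneg _) _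

lemma absRoot_pow {k : ℕ} (hk : k ≠ 0) (t : ℝ) : absRoot k t ^ k = |t| :=
  Real.rpow_inv_natCast_pow (abs_nonneg _) hk

lemma absRoot_zero {k : ℕ} (hk : k ≠ 0) : absRoot k 0 = 0 := by
  rw [absRoot, abs_zero, Real.zero_rpow (by simpa using hk)]

@[fun_prop]
lemma continuous_absRoot (k : ℕ) : Continuous (absRoot k) :=
  (Real.continuous_rpow_const (by positivity)).comp continuous_abs

lemma pow_mul_abs_sub_le {k : ℕ} (hk : k ≠ 0) {s s' : ℝ} (hs : 0 ≤ s) (hs' : 0 ≤ s') :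
    s ^ k * |s - s'| ≤ s * |s ^ k - s' ^ k| := by
  obtain ⟨m, rfl⟩ := Nat.exists_eq_succ_of_ne_zero hk
  rcases le_total s' s with h | h
  · have hpow : s' ^ m ≤ s ^ m := pow_le_pow_left₀ hs' h _
    rw [abs_of_nonneg (sub_nonneg.2 h), abs_of_nonneg (sub_nonneg.2 (pow_le_pow_left₀ hs' h _)),
      Nat.succ_eq_add_one, pow_succ, pow_succ]
    nlinarith [mul_nonneg hs (mul_nonneg hs' (sub_nonneg.2 hpow))]
  · have hpow : s ^ m ≤ s' ^ m := pow_le_pow_left₀ hs h _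
    rw [abs_of_nonpos (sub_nonpos.2 h), abs_of_nonpos (sub_nonpos.2 (pow_le_pow_left₀ hs h _)),
      Nat.succ_eq_add_one, pow_succ, pow_succ]
    nlinarith [mul_nonneg hs (mul_nonneg hs' (sub_nonneg.2 hpow))]

lemma abs_mul_abs_absRoot_sub_le {k : ℕ} (hk : k ≠ 0) (t t' : ℝ) :
    |t| * |absRoot k t - absRoot k t'| ≤ absRoot k t * |t - t'| := by
  have h := pow_mul_abs_sub_le hk (absRoot_nonneg k t) (absRoot_nonneg k t')
  rw [absRoot_pow hk, absRoot_pow hk] at h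
  exact h.trans (mul_le_mul_of_nonneg_left (abs_abs_sub_abs_le t t') (absRoot_nonneg k t))

lemma norm_smul_comp_absRoot_sub_le {k : ℕ} (hk : k ≠ 0) {R : ℝ × V → W} {K : NNReal}
    {s : Set (ℝ × V)} (hR : LipschitzOnWith K R s) {t t' : ℝ} {z z' : V}
    (h : (absRoot k t, z) ∈ s) (h' : (absRoot k t', z') ∈ s) :
    ‖t • (R (absRoot k t, z) - R (absRoot k t', z'))‖ ≤
      K * (absRoot k t + |t|) * ‖(t, z) - (t', z')‖ := by
  have hsub : ‖(absRoot k t, z) - (absRoot k t', z')‖ ≤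
      |absRoot k t - absRoot k t'| + ‖z - z'‖ :=
    max_le (le_add_of_nonneg_right (norm_nonneg _)) (le_add_of_nonneg_left (abs_nonneg _))
  have hroot := abs_mul_abs_absRoot_sub_le hk t t'
  have ht : |t - t'| ≤ ‖(t, z) - (t', z')‖ := norm_fst_le ((t, z) - (t', z'))
  have hz : ‖z - z'‖ ≤ ‖(t, z) - (t', z')‖ := norm_snd_le ((t, z) - (t', z'))
  have hr := absRoot_nonneg k t
  calc ‖t • (R (absRoot k t, z) - R (absRoot k t', z'))‖
      ≤ |t| * (K * (|absRoot k t - absRoot k t'| + ‖z - z'‖)) := by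
        rw [norm_smul, Real.norm_eq_abs]
        gcongr
        exact (hR.norm_sub_le h h').trans (by gcongr)
    _ = K * (|t| * |absRoot k t - absRoot k t'| + |t| * ‖z - z'‖) := by ring
    _ ≤ K * (absRoot k t * ‖(t, z) - (t', z')‖ + |t| * ‖(t, z) - (t', z')‖) :=
        mul_le_mul_of_nonneg_left
          (add_le_add (hroot.trans (by gcongr)) (by gcongr)) K.coe_nonneg
    _ = K * (absRoot k t + |t|) * ‖(t, z) - (t', z')‖ := by ring

variable [NormedSpace ℝ V]

lemma hasStrictFDerivAt_smul_of_isLittleO {ℓ : V →L[ℝ] ℝ} {h : V → W} {x : V}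
    (hh : ContinuousAt h x)
    (ho : (fun p : V × V => ℓ p.1 • (h p.1 - h p.2)) =o[𝓝 (x, x)] fun p => p.1 - p.2) :
    HasStrictFDerivAt (fun q => ℓ q • h q) (ℓ.smulRight (h x)) x := by
  have hlim : (fun p : V × V => h p.2 - h x) =o[𝓝 (x, x)] fun _ => (1 : ℝ) := by
    refine (Asymptotics.isLittleO_one_iff ℝ).2 ?_
    simpa using (hh.tendsto.comp (continuous_snd.tendsto (x, x))).sub_const (h x)
  have hfirst : (fun p : V × V => ℓ (p.1 - p.2) • (h p.2 - h x)) =o[𝓝 (x, x)]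
      fun p => p.1 - p.2 := by
    simpa using ((ℓ.isBigO_comp (fun p : V × V => p.1 - p.2) _).norm_right.smul_isLittleO hlim)
  refine .of_isLittleO ((hfirst.add ho).congr_left fun p => ?_)
  simp only [ContinuousLinearMap.smulRight_apply, map_sub]
  module

lemma hasStrictFDerivAt_smul_comp_absRoot {k : ℕ} (hk : k ≠ 0) {R : ℝ × V → W} {y : V}
    (hR : ContDiffAt ℝ 1 R (0, y)) :
    HasStrictFDerivAt (fun q : ℝ × V => q.1 • R (absRoot k q.1, q.2))
      ((ContinuousLinearMap.fst ℝ ℝ V).smulRight (R (0, y))) (0, y) := by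
  let ψ : ℝ × V → ℝ × V := fun q => (absRoot k q.1, q.2)
  have hψ : Continuous ψ := by fun_prop
  have hψ₀ : ψ (0, y) = (0, y) := by simp [ψ, absRoot_zero hk]
  obtain ⟨K, s, hs, hK⟩ := hR.exists_lipschitzOnWith
  have hψs : ∀ᶠ q in 𝓝 ((0 : ℝ), y), ψ q ∈ s := hψ.continuousAt.eventually_mem (by rwa [hψ₀])
  have hcoeff : (fun p : (ℝ × V) × ℝ × V => K * (absRoot k p.1.1 + |p.1.1|))
      =o[𝓝 ((0, y), (0, y))] fun _ => (1 : ℝ) := by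
    have : Continuous fun p : (ℝ × V) × ℝ × V => K * (absRoot k p.1.1 + |p.1.1|) := by fun_prop
    simpa [absRoot_zero hk] using this.tendsto ((0, y), (0, y))
  have hbound : ∀ᶠ p in 𝓝 (((0 : ℝ), y), ((0 : ℝ), y)),
      ‖p.1.1 • (R (ψ p.1) - R (ψ p.2))‖ ≤
        1 * ‖K * (absRoot k p.1.1 + |p.1.1|) * ‖p.1 - p.2‖‖ := by
    filter_upwards [(continuous_fst.tendsto _).eventually hψs,
      (continuous_snd.tendsto _).eventually hψs] with ⟨⟨t, z⟩, ⟨t', z'⟩⟩ hq hq'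
    rw [one_mul]
    exact (norm_smul_comp_absRoot_sub_le hk hK hq hq').trans (Real.le_norm_self _)
  have hlittle := (Asymptotics.IsBigO.of_bound 1 hbound).trans_isLittleO
    (by simpa using hcoeff.mul_isBigO (Asymptotics.isBigO_refl (fun p => ‖p.1 - p.2‖) _))
  have hRψ : ContinuousAt (fun q => R (ψ q)) (0, y) :=
    ContinuousAt.comp_of_eq hR.continuousAt hψ.continuousAt hψ₀
  have h := hasStrictFDerivAt_smul_of_isLittleO (ℓ := .fst ℝ ℝ V) hRψ hlittle
  rwa [hψ₀] at h

lemma exists_mem_segment_apply_eq_zero {ℓ : V →L[ℝ] ℝ} {p q : V} (hp : 0 ≤ ℓ p) (hq : ℓ q ≤ 0) :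
    ∃ z ∈ segment ℝ p q, ℓ z = 0 :=
  (convex_segment p q).isPreconnected.intermediate_value (right_mem_segment ℝ p q)
    (left_mem_segment ℝ p q) ℓ.continuous.continuousOn ⟨hq, hp⟩

-- Across the hyperplane `ℓ = 0`, the increment is split at a point of the segment lying on it.
lemma hasStrictFDerivAt_ite_nonneg {ℓ : V →L[ℝ] ℝ} {f g : V → W} {f' : V →L[ℝ] W} {x : V}
    (hf : HasStrictFDerivAt f f' x) (hg : HasStrictFDerivAt g f' x)
    (hfg : ∀ q, ℓ q = 0 → f q = g q) :
    HasStrictFDerivAt (fun q => if 0 ≤ ℓ q then f q else g q) f' x := by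
  refine .of_isLittleO (Asymptotics.isLittleO_iff.2 fun c hc => ?_)
  have hball := (hf.isLittleO.def hc).and (hg.isLittleO.def hc)
  rw [nhds_prod_eq] at hball
  obtain ⟨ε, hε, hball⟩ := (Metric.nhds_basis_ball.prod_self.eventually_iff).1 hball
  have hseg {p q z : V} (hp : p ∈ Metric.ball x ε) (hq : q ∈ Metric.ball x ε)
      (hz : z ∈ segment ℝ p q) : z ∈ Metric.ball x ε :=
    (convex_ball x ε).segment_subset hp hq hz
  have hcross (p q : V) (hp : p ∈ Metric.ball x ε) (hq : q ∈ Metric.ball x ε) (hp₀ : 0 ≤ ℓ p)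
      (hq₀ : ℓ q ≤ 0) : ‖f p - g q - f' (p - q)‖ ≤ c * ‖p - q‖ := by
    obtain ⟨z, hz, hz₀⟩ := exists_mem_segment_apply_eq_zero hp₀ hq₀
    have hzball := hseg hp hq hz
    calc ‖f p - g q - f' (p - q)‖
        = ‖f p - f z - f' (p - z) + (g z - g q - f' (z - q))‖ := by
          rw [hfg z hz₀, ← sub_add_sub_cancel p z q, map_add]; congr 1; abel
      _ ≤ c * ‖p - z‖ + c * ‖z - q‖ := norm_add_le_of_le (hball (Set.mk_mem_prod hp hzball)).1
          (hball (Set.mk_mem_prod hzball hq)).2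
      _ = c * ‖p - q‖ := by
          rw [← mul_add, ← dist_eq_norm, ← dist_eq_norm, dist_add_dist_of_mem_segment hz,
            dist_eq_norm]
  rw [nhds_prod_eq]
  refine (Metric.nhds_basis_ball.prod_self.eventually_iff).2 ⟨ε, hε, ?_⟩
  rintro ⟨p, q⟩ hpq
  obtain ⟨hpε, hqε⟩ := id hpq
  dsimp only
  split_ifs with hp₀ hq₀ hq₀
  · exact (hball hpq).1
  · exact hcross p q hpε hqε hp₀ (not_le.1 hq₀).le
  · rw [← norm_neg, norm_sub_rev p q]
    have := hcross q p hqε hpε hq₀ (not_le.1 hp₀).le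
    rwa [show -(g p - f q - f' (p - q)) = f q - g p - f' (q - p) by
      rw [← neg_sub q p, map_neg]; abel]
  · exact (hball hpq).2

/-- The two halves of a family with leading field of order `k`, reparametrized by the signed
`k`-th root so that the displacement becomes linear: `P` for positive time, its inverse `P'` for
negative time. -/
def signedFamily (k : ℕ) (P P' : ℝ × V → V) (q : ℝ × V) : V :=
  if 0 ≤ q.1 then P (absRoot k q.1, q.2) else P' (absRoot k q.1, q.2)

end Root

namespace HasLeadingField

variable {V : Type*} [NormedAddCommGroup V] [NormedSpace ℝ V] {k : ℕ} {Y : V → V}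
  {P P' : ℝ × V → V}

lemma signedFamily_zero (h : HasLeadingField k Y P P') (y : V) :
    signedFamily k P P' (0, y) = y := by
  simp [signedFamily, absRoot_zero h.order_ne_zero, h.apply_zero]

lemma hasStrictFDerivAt_signedFamily (h : HasLeadingField k Y P P') (y : V) :
    HasStrictFDerivAt (signedFamily k P P')
      (.snd ℝ ℝ V + (ContinuousLinearMap.fst ℝ ℝ V).smulRight (Y y)) (0, y) := by
  obtain ⟨A, hA, hPA, hA₀⟩ := h.exists_expansion
  have hP' := h.contDiff_inverse
  have hR (R : ℝ × V → V) (hR : ContDiff ℝ ∞ R) (hR₀ : R (0, y) = Y y) :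
      HasStrictFDerivAt (fun q : ℝ × V => q.2 + q.1 • R (absRoot k q.1, q.2))
        (.snd ℝ ℝ V + (ContinuousLinearMap.fst ℝ ℝ V).smulRight (Y y)) (0, y) := by
    rw [← hR₀]
    exact hasStrictFDerivAt_snd.add (hasStrictFDerivAt_smul_comp_absRoot h.order_ne_zero
      (hR.of_le (by simp)).contDiffAt)
  have hglued : HasStrictFDerivAt (fun q : ℝ × V => if 0 ≤ q.1
      then q.2 + q.1 • A (absRoot k q.1, q.2)
      else q.2 + q.1 • A (absRoot k q.1, P' (absRoot k q.1, q.2))) _ (0, y) :=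
    hasStrictFDerivAt_ite_nonneg (ℓ := .fst ℝ ℝ V) (hR A hA (hA₀ y))
      (hR (fun q => A (q.1, P' q)) (by fun_prop) (by rw [h.inverse_apply_zero, hA₀]))
      fun q hq => by simp [show q.1 = 0 from hq]
  refine hglued.congr_of_eventuallyEq (.of_forall fun ⟨t, z⟩ => ?_)
  dsimp only [signedFamily]
  split_ifs with ht
  · rw [hPA, absRoot_pow h.order_ne_zero, abs_of_nonneg ht]
  · have hz := hPA (absRoot k t) (P' (absRoot k t, z))
    rw [h.rightInverse, absRoot_pow h.order_ne_zero, abs_of_neg (not_le.1 ht), neg_smul,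
      ← sub_eq_add_neg, eq_sub_iff_add_eq] at hz
    exact hz

end HasLeadingField

/-! ### Families that lift through a map -/

section Lifting

variable {E V W W' : Type*} [TopologicalSpace E]
  [Zero W] [TopologicalSpace W] [Zero W'] [TopologicalSpace W']

/-- The family `P` of self-maps of `V`, parametrized by `W`, lifts continuously through `F` to a
family of self-maps of `E` that is the identity at parameter `0`. -/
def IsLiftable (F : E → V) (P : W × V → V) : Prop :=
  ∃ S : E × W → E, Continuous S ∧ (∀ u, S (u, 0) = u) ∧ ∀ u w, F (S (u, w)) = P (w, F u)

namespace IsLiftable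

variable {F : E → V}

lemma comp {P Q : W × V → V} (hQ : IsLiftable F Q) (hP : IsLiftable F P) :
    IsLiftable F fun q => Q (q.1, P q) := by
  obtain ⟨S, hS, hS₀, hSF⟩ := hP
  obtain ⟨T, hT, hT₀, hTF⟩ := hQ
  exact ⟨fun q => T (S q, q.2), by fun_prop, fun u => by simp only [hS₀, hT₀],
    fun u w => by simp only [hTF, hSF]⟩

lemma reparam {P : W × V → V} (hP : IsLiftable F P) {f : W' → W} (hf : Continuous f)
    (hf₀ : f 0 = 0) : IsLiftable F fun q : W' × V => P (f q.1, q.2) := by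
  obtain ⟨S, hS, hS₀, hSF⟩ := hP
  exact ⟨fun q => S (q.1, f q.2), by fun_prop, fun u => by simp only [hf₀, hS₀],
    fun u w => hSF u (f w)⟩

lemma signedFamily {k : ℕ} (hk : k ≠ 0) {P P' : ℝ × V → V} (hP : IsLiftable F P)
    (hP' : IsLiftable F P') : IsLiftable F (signedFamily k P P') := by
  obtain ⟨S, hS, hS₀, hSF⟩ := hP
  obtain ⟨S', hS', hS₀', hSF'⟩ := hP'
  refine ⟨fun q => if 0 ≤ q.2 then S (q.1, absRoot k q.2) else S' (q.1, absRoot k q.2), ?_,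
    fun u => ?_, fun u t => ?_⟩
  · refine Continuous.if_le (by fun_prop) (by fun_prop) continuous_const continuous_snd
      fun q hq => ?_
    rw [← hq, absRoot_zero hk, hS₀, hS₀']
  · simp only [absRoot_zero hk, hS₀, le_refl, if_true]
  · dsimp only [_root_.signedFamily]
    split_ifs
    · exact hSF u _
    · exact hSF' u _

end IsLiftable

variable [NormedAddCommGroup V] [NormedSpace ℝ V]

/-- `Y` is the leading field of a family of diffeomorphisms that lifts through `F` together with
the family of its inverses. -/
def IsLiftableField (F : E → V) (Y : V → V) : Prop :=
  ∃ k P P', HasLeadingField k Y P P' ∧ IsLiftable F P ∧ IsLiftable F P'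

lemma IsLiftableField.lieBracket [CompleteSpace V] {F : E → V} {Y Z : V → V}
    (hY : IsLiftableField F Y) (hZ : IsLiftableField F Z) :
    IsLiftableField F (VectorField.lieBracket ℝ Y Z) := by
  obtain ⟨k, P, P', hP, hP_lift, hP'_lift⟩ := hY
  obtain ⟨l, Q, Q', hQ, hQ_lift, hQ'_lift⟩ := hZ
  exact ⟨k + l, _, _, hP.commutator hQ, hQ'_lift.comp (hP'_lift.comp (hQ_lift.comp hP_lift)),
    hP'_lift.comp (hQ'_lift.comp (hP_lift.comp hQ_lift))⟩

end Lifting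

/-! ### Local steering -/

section Achievable

variable {E V W W' : Type*} [TopologicalSpace E]
  [NormedAddCommGroup W] [NormedSpace ℝ W] [NormedAddCommGroup W'] [NormedSpace ℝ W']
  [NormedAddCommGroup V] [NormedSpace ℝ V] {F : E → V} {y : V}

/-- `L` is a first-order displacement at `y` that can be achieved by a liftable family. -/
def IsAchievable (F : E → V) (y : V) (L : W →L[ℝ] V) : Prop :=
  ∃ Φ : W × V → V, IsLiftable F Φ ∧ (∀ z, Φ (0, z) = z) ∧
    HasStrictFDerivAt Φ (.snd ℝ W V + L ∘L .fst ℝ W V) (0, y)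

namespace IsAchievable

lemma zero : IsAchievable F y (0 : W →L[ℝ] V) :=
  ⟨Prod.snd, ⟨Prod.fst, continuous_fst, fun _ => rfl, fun _ _ => rfl⟩, fun _ => rfl,
    by simpa using hasStrictFDerivAt_snd⟩

lemma add {L L' : W →L[ℝ] V} (hL : IsAchievable F y L) (hL' : IsAchievable F y L') :
    IsAchievable F y (L + L') := by
  obtain ⟨Φ, hΦ, hΦ₀, hderiv⟩ := hL
  obtain ⟨Ψ, hΨ, hΨ₀, hderiv'⟩ := hL'
  refine ⟨fun q => Ψ (q.1, Φ q), hΨ.comp hΦ, fun z => by simp only [hΦ₀, hΨ₀], ?_⟩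
  have hpair : HasStrictFDerivAt (fun q : W × V => (q.1, Φ q)) _ (0, y) :=
    hasStrictFDerivAt_fst.prodMk hderiv
  refine (HasStrictFDerivAt.comp (g := Ψ) (0, y) (by rwa [hΦ₀]) hpair).congr_fderiv ?_
  ext q <;> simp

lemma comp {L : W →L[ℝ] V} (hL : IsAchievable F y L) (T : W' →L[ℝ] W) :
    IsAchievable F y (L ∘L T) := by
  obtain ⟨Φ, hΦ, hΦ₀, hderiv⟩ := hL
  refine ⟨fun q => Φ (T q.1, q.2), hΦ.reparam T.continuous (map_zero T),
    fun z => by simp only [map_zero, hΦ₀], ?_⟩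
  have hpair : HasStrictFDerivAt (fun q : W' × V => (T q.1, q.2)) _ (0, y) :=
    (T.hasStrictFDerivAt.comp (0, y) hasStrictFDerivAt_fst).prodMk hasStrictFDerivAt_snd
  refine (HasStrictFDerivAt.comp (g := Φ) (0, y) (by rwa [map_zero]) hpair).congr_fderiv ?_
  ext q <;> simp

end IsAchievable

lemma IsLiftableField.isAchievable {Y : V → V} (hY : IsLiftableField F Y) (y : V) :
    IsAchievable F y (.toSpanSingleton ℝ (Y y)) := by
  obtain ⟨k, P, P', hP, hP_lift, hP'_lift⟩ := hY
  refine ⟨signedFamily k P P', hP_lift.signedFamily hP.order_ne_zero hP'_lift,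
    hP.signedFamily_zero, (hP.hasStrictFDerivAt_signedFamily y).congr_fderiv ?_⟩
  ext q <;> simp

lemma isAchievable_toSpanSingleton_of_mem_span {v : V}
    (hv : v ∈ Submodule.span ℝ {v | ∃ Y, IsLiftableField F Y ∧ Y y = v}) :
    IsAchievable F y (.toSpanSingleton ℝ v) := by
  induction hv using Submodule.span_induction with
  | mem v hv =>
    obtain ⟨Y, hY, rfl⟩ := hv
    exact hY.isAchievable y
  | zero => simpa using IsAchievable.zero
  | add v w _ _ hv hw => simpa [ContinuousLinearMap.toSpanSingleton_add] using hv.add hw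
  | smul c v _ hv =>
    convert hv.comp (c • .id ℝ ℝ) using 1
    ext
    simp

lemma isAchievable_id_of_span_eq_top [FiniteDimensional ℝ V]
    (hspan : Submodule.span ℝ {v | ∃ Y, IsLiftableField F Y ∧ Y y = v} = ⊤) :
    IsAchievable F y (.id ℝ V) := by
  let b := Module.finBasis ℝ V
  have hsum : .id ℝ V =
      ∑ i, .toSpanSingleton ℝ (b i) ∘L LinearMap.toContinuousLinearMap (b.coord i) := by
    ext v
    simp [b.sum_repr]
  rw [hsum]
  refine Finset.sum_induction _ _ (fun _ _ => IsAchievable.add) IsAchievable.zero fun i _ => ?_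
  exact (isAchievable_toSpanSingleton_of_mem_span (by rw [hspan]; trivial)).comp _

end Achievable

/-- `Λ` steers along `F` over `D`: it continuously moves a point `u` with `F u = y` to a point with
`F`-value `y'`, whenever `(y, y') ∈ D`, and leaves `u` in place if `y' = y`. The value `y = F u` is
a separate argument of `Λ` because `F` is not assumed to be continuous. -/
structure IsSteering {E V : Type*} [TopologicalSpace E] [TopologicalSpace V] (F : E → V)
    (D : Set (V × V)) (Λ : E × V × V → E) : Prop where
  isOpen : IsOpen D
  continuousOn : ContinuousOn Λ {q | q.2 ∈ D}
  apply_self : ∀ u y, (y, y) ∈ D → Λ (u, y, y) = u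
  map_apply : ∀ u y, (F u, y) ∈ D → F (Λ (u, F u, y)) = y

section LocalSteering

variable {E V : Type*} [TopologicalSpace E] [NormedAddCommGroup V] [NormedSpace ℝ V]
  {F : E → V} {y : V}

/-- The invertible derivative of `(w, z) ↦ (z, Φ (w, z))` when `Φ` has derivative
`(w, z) ↦ z + w`. -/
def shearEquiv (V : Type*) [NormedAddCommGroup V] [NormedSpace ℝ V] : (V × V) ≃L[ℝ] (V × V) :=
  .equivOfInverse ((ContinuousLinearMap.snd ℝ V V).prod (.snd ℝ V V + .fst ℝ V V))
    ((ContinuousLinearMap.snd ℝ V V - .fst ℝ V V).prod (.fst ℝ V V))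
    (fun q => by simp) (fun q => by simp)

-- By the inverse function theorem, `(y, y')` determines the parameter `w` with `Φ (w, y) = y'`.
lemma IsAchievable.exists_isSteering [CompleteSpace V] (h : IsAchievable F y (.id ℝ V)) :
    ∃ D Λ, IsSteering F D Λ ∧ (y, y) ∈ D := by
  obtain ⟨Φ, ⟨S, hS, hS₀, hSF⟩, hΦ₀, hderiv⟩ := h
  let Ψ : V × V → V × V := fun q => (q.2, Φ q)
  have hΨ₀ (z : V) : Ψ (0, z) = (z, z) := by simp only [Ψ, hΦ₀]
  have hΨ : HasStrictFDerivAt Ψ (shearEquiv V : V × V →L[ℝ] V × V) (0, y) :=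
    hasStrictFDerivAt_snd.prodMk hderiv
  let ρ := hΨ.toOpenPartialHomeomorph Ψ
  have hsource : (0, y) ∈ ρ.source := hΨ.mem_toOpenPartialHomeomorph_source
  refine ⟨ρ.target ∩ {q | (0, q.1) ∈ ρ.source}, fun q => S (q.1, (ρ.symm q.2).1),
    ⟨ρ.open_target.inter (ρ.open_source.preimage (by fun_prop)), ?_, fun u z hz => ?_,
      fun u z hz => ?_⟩, ?_, hsource⟩
  · refine hS.comp_continuousOn (continuousOn_fst.prodMk (continuous_fst.comp_continuousOn ?_))
    exact ρ.continuousOn_symm.comp continuousOn_snd fun q hq => hq.1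
  · have hsymm : ρ.symm (z, z) = (0, z) := by
      rw [← hΨ₀]
      exact ρ.left_inv hz.2
    rw [hsymm, hS₀]
  · have hright : Ψ (ρ.symm (F u, z)) = (F u, z) := ρ.right_inv hz.1
    obtain ⟨hsnd, hΦ⟩ := Prod.mk.inj hright
    calc F (S (u, (ρ.symm (F u, z)).1))
        = Φ ((ρ.symm (F u, z)).1, F u) := hSF _ _
      _ = Φ (ρ.symm (F u, z)) := congrArg Φ (Prod.ext rfl hsnd.symm)
      _ = z := hΦ
  · rw [← hΨ₀]
    exact ρ.map_source hsource

end LocalSteering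

/-! ### Chains of steerings -/

section SteeringChain

variable {Q E V : Type*} {F : E → V} {D : ℕ → Set (V × V)} {Λ : ℕ → E × V × V → E}
  {c : ℕ → Q → V} {u₀ : Q → E}

open Classical in
/-- The points reached from `u₀ q` by steering successively along the points `c 0 q, c 1 q, …`,
where no steering is applied while `c k q` does not move. -/
def steeringChain (Λ : ℕ → E × V × V → E) (c : ℕ → Q → V) (u₀ : Q → E) : ℕ → Q → E
  | 0, q => u₀ q
  | k + 1, q => if c k q = c (k + 1) q then steeringChain Λ c u₀ k q
      else Λ k (steeringChain Λ c u₀ k q, c k q, c (k + 1) q)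

lemma steeringChain_succ_of_eq {k : ℕ} {q : Q} (h : c k q = c (k + 1) q) :
    steeringChain Λ c u₀ (k + 1) q = steeringChain Λ c u₀ k q := if_pos h

lemma steeringChain_eq_of_forall {q : Q} (h : ∀ k, c k q = c (k + 1) q) (k : ℕ) :
    steeringChain Λ c u₀ k q = u₀ q := by
  induction k with
  | zero => rfl
  | succ k ih => rw [steeringChain_succ_of_eq (h k), ih]

variable [TopologicalSpace E] [TopologicalSpace V]

lemma steeringChain_succ_of_mem (hΛ : ∀ k, IsSteering F (D k) (Λ k)) {k : ℕ} {q : Q}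
    (h : (c k q, c (k + 1) q) ∈ D k) :
    steeringChain Λ c u₀ (k + 1) q = Λ k (steeringChain Λ c u₀ k q, c k q, c (k + 1) q) := by
  by_cases heq : c k q = c (k + 1) q
  · rw [← heq] at h
    rw [steeringChain_succ_of_eq heq, ← heq, (hΛ k).apply_self _ _ h]
  · exact if_neg heq

lemma map_steeringChain (hΛ : ∀ k, IsSteering F (D k) (Λ k)) {q : Q}
    (hD : ∀ k, (c k q, c (k + 1) q) ∈ D k ∨ c k q = c (k + 1) q) (hu₀ : F (u₀ q) = c 0 q)
    (k : ℕ) : F (steeringChain Λ c u₀ k q) = c k q := by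
  induction k with
  | zero => exact hu₀
  | succ k ih =>
    rcases hD k with hmem | heq
    · rw [steeringChain_succ_of_mem hΛ hmem]
      rw [← ih] at hmem ⊢
      exact (hΛ k).map_apply _ _ hmem
    · rw [steeringChain_succ_of_eq heq, ih, heq]

variable [TopologicalSpace Q]

lemma continuous_steeringChain (hΛ : ∀ k, IsSteering F (D k) (Λ k)) (hc : ∀ k, Continuous (c k))
    (hD : ∀ k q, (c k q, c (k + 1) q) ∈ D k ∨ c k =ᶠ[𝓝 q] c (k + 1)) (hu₀ : Continuous u₀)
    (k : ℕ) : Continuous (steeringChain Λ c u₀ k) := by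
  induction k with
  | zero => exact hu₀
  | succ k ih =>
    refine continuous_iff_continuousAt.2 fun q => ?_
    rcases hD k q with hmem | heq
    · have hpair : Continuous fun q => (c k q, c (k + 1) q) := (hc k).prodMk (hc (k + 1))
      have hΛ_at : ContinuousAt (Λ k) (steeringChain Λ c u₀ k q, c k q, c (k + 1) q) :=
        (hΛ k).continuousOn.continuousAt
          (((hΛ k).isOpen.preimage continuous_snd).mem_nhds hmem)
      refine (hΛ_at.comp (f := fun q => (steeringChain Λ c u₀ k q, c k q, c (k + 1) q))
        (ih.prodMk hpair).continuousAt).congr ?_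
      filter_upwards [hpair.continuousAt.eventually_mem ((hΛ k).isOpen.mem_nhds hmem)] with q' hq'
      exact (steeringChain_succ_of_mem hΛ hq').symm
    · refine ih.continuousAt.congr ?_
      filter_upwards [heq] with q' hq'
      exact (steeringChain_succ_of_eq hq').symm

lemma exists_limit_steeringChain (hΛ : ∀ k, IsSteering F (D k) (Λ k))
    (hc : ∀ k, Continuous (c k))
    (hD : ∀ k q, (c k q, c (k + 1) q) ∈ D k ∨ c k =ᶠ[𝓝 q] c (k + 1))
    (hfin : LocallyFinite fun k => {q | c k q ≠ c (k + 1) q}) (hu₀ : Continuous u₀) :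
    ∃ L : Q → E, Continuous L ∧ (∀ q, (∀ k, c k q = c (k + 1) q) → L q = u₀ q) ∧
      ∀ q, F (u₀ q) = c 0 q → ∀ᶠ k in atTop, F (L q) = c k q := by
  have hfin' : LocallyFinite fun k =>
      {q | steeringChain Λ c u₀ (k + 1) q ≠ steeringChain Λ c u₀ k q} :=
    hfin.subset fun k q hq heq => hq (steeringChain_succ_of_eq heq)
  obtain ⟨L, hL⟩ := hfin'.exists_forall_eventually_atTop_eventuallyEq
  refine ⟨L, continuous_iff_continuousAt.2 fun q => ?_, fun q hq => ?_, fun q hq => ?_⟩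
  · obtain ⟨k, hk⟩ := (hL q).exists
    exact (continuous_steeringChain hΛ hc hD hu₀ k).continuousAt.congr hk
  · obtain ⟨k, hk⟩ := (hL q).exists
    rw [← hk.self_of_nhds, steeringChain_eq_of_forall hq]
  · filter_upwards [hL q] with k hk
    rw [← hk.self_of_nhds]
    exact map_steeringChain hΛ (fun k => (hD k q).imp_right (·.self_of_nhds)) hq k

end SteeringChain

/-! ### Global steering -/

section GlobalSteering

variable {E V : Type*} [TopologicalSpace E] [NormedAddCommGroup V] [NormedSpace ℝ V] {F : E → V}

/-- The intermediate points `y = c₀, c₁, …` on the segment from `y` to `y'` whose `i`-th step has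
relative length `ρ i y`. -/
def partialPoint (ρ : PartitionOfUnity ℕ V) (i : ℕ) (q : V × V) : V :=
  AffineMap.lineMap q.1 q.2 (∑ j ∈ Finset.range i, ρ j q.1)

variable {ρ : PartitionOfUnity ℕ V}

lemma continuous_partialPoint (i : ℕ) : Continuous (partialPoint ρ i) :=
  continuous_fst.lineMap continuous_snd
    (continuous_finsetSum _ fun j _ => (ρ j).continuous.comp continuous_fst)

lemma partialPoint_diag (i : ℕ) (y : V) : partialPoint ρ i (y, y) = y :=
  AffineMap.lineMap_same_apply y _

lemma partialPoint_zero (q : V × V) : partialPoint ρ 0 q = q.1 :=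
  AffineMap.lineMap_apply_zero q.1 q.2

lemma partialPoint_succ_of_eq_zero {i : ℕ} {q : V × V} (h : ρ i q.1 = 0) :
    partialPoint ρ i q = partialPoint ρ (i + 1) q := by
  rw [partialPoint, partialPoint, Finset.sum_range_succ, h, add_zero]

lemma eventually_partialPoint_eq (q : V × V) : ∀ᶠ i in atTop, partialPoint ρ i q = q.2 := by
  filter_upwards [tendsto_finset_range.eventually (eventually_ge_atTop (ρ.finsupport q.1))]
    with i hi
  rw [partialPoint, ρ.sum_finsupport' (mem_univ _) hi, AffineMap.lineMap_apply_one]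

/-- The pairs for which each step between intermediate points that is moving near `q.1` is
allowed. -/
def patchDomain (ρ : PartitionOfUnity ℕ V) (D : ℕ → Set (V × V)) : Set (V × V) :=
  {q | ∀ i, q.1 ∈ tsupport (ρ i) → (partialPoint ρ i q, partialPoint ρ (i + 1) q) ∈ D i}

lemma isOpen_patchDomain {D : ℕ → Set (V × V)} (hD : ∀ i, IsOpen (D i)) :
    IsOpen (patchDomain ρ D) := by
  let bad (i : ℕ) : Set (V × V) := Prod.fst ⁻¹' tsupport (ρ i) ∩
    (fun q => (partialPoint ρ i q, partialPoint ρ (i + 1) q)) ⁻¹' (D i)ᶜ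
  have hbad : IsClosed (⋃ i, bad i) := by
    refine ((ρ.locallyFinite_tsupport.preimage_continuous continuous_fst).subset
      fun i => inter_subset_left).isClosed_iUnion fun i => ?_
    exact ((isClosed_tsupport _).preimage continuous_fst).inter ((hD i).isClosed_compl.preimage
      ((continuous_partialPoint i).prodMk (continuous_partialPoint (i + 1))))
  convert hbad.isOpen_compl using 1
  ext q
  simp [patchDomain, bad]

lemma exists_isSteering_patchDomain {D : ℕ → Set (V × V)} {Λ : ℕ → E × V × V → E}
    (hΛ : ∀ i, IsSteering F (D i) (Λ i)) :
    ∃ Λ', IsSteering F (patchDomain ρ D) Λ' := by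
  let Q := {q : E × V × V // q.2 ∈ patchDomain ρ D}
  let c (i : ℕ) (q : Q) : V := partialPoint ρ i q.1.2
  have hval : Continuous fun q : Q => q.1.2.1 := by fun_prop
  have hc (i : ℕ) : Continuous (c i) := (continuous_partialPoint i).comp (by fun_prop)
  have hstep (i : ℕ) (q : Q) : (c i q, c (i + 1) q) ∈ D i ∨ c i =ᶠ[𝓝 q] c (i + 1) := by
    by_cases hq : q.1.2.1 ∈ tsupport (ρ i)
    · exact .inl (q.2 i hq)
    · right
      filter_upwards [hval.continuousAt.eventually (notMem_tsupport_iff_eventuallyEq.1 hq)]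
        with q' hq' using partialPoint_succ_of_eq_zero hq'
  have hfin : LocallyFinite fun i => {q | c i q ≠ c (i + 1) q} :=
    (ρ.locallyFinite_tsupport.preimage_continuous hval).subset fun i q hq => by
      by_contra h
      exact hq (partialPoint_succ_of_eq_zero (image_eq_zero_of_notMem_tsupport h))
  obtain ⟨L, hL, hL_self, hFL⟩ := exists_limit_steeringChain hΛ hc hstep hfin
    (u₀ := fun q => q.1.1) (by fun_prop)
  classical
  refine ⟨fun q => if hq : q.2 ∈ patchDomain ρ D then L ⟨q, hq⟩ else q.1,
    isOpen_patchDomain fun i => (hΛ i).isOpen, ?_, fun u y hy => ?_, fun u y hy => ?_⟩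
  · rw [continuousOn_iff_continuous_domRestrict]
    exact hL.congr fun q => by rw [domRestrict_apply, dif_pos q.2]
  · rw [dif_pos hy]
    exact hL_self _ fun i => by simp only [c, partialPoint_diag]
  · rw [dif_pos hy]
    obtain ⟨i, hFL, hi⟩ := ((hFL ⟨(u, F u, y), hy⟩ (partialPoint_zero (F u, y)).symm).and
      (eventually_partialPoint_eq (F u, y))).exists
    rw [hFL]
    exact hi

lemma exists_isSteering_of_local [SecondCountableTopology V]
    (hloc : ∀ y, ∃ D Λ, IsSteering F D Λ ∧ (y, y) ∈ D) :
    ∃ D Λ, IsSteering F D Λ ∧ ∀ y, (y, y) ∈ D := by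
  choose D Λ hΛ hmem using hloc
  have hopen (y : V) : IsOpen {z | (z, z) ∈ D y} := (hΛ y).isOpen.preimage (by fun_prop)
  obtain ⟨s, hs, hcover⟩ :=
    TopologicalSpace.countable_cover_nhds fun y => (hopen y).mem_nhds (hmem y)
  have hne : s.Nonempty := by
    obtain ⟨y, hy, -⟩ := mem_iUnion₂.1 (hcover.symm ▸ mem_univ (0 : V))
    exact ⟨y, hy⟩
  obtain ⟨a, rfl⟩ := hs.exists_eq_range hne
  obtain ⟨ρ, hρ⟩ := PartitionOfUnity.exists_isSubordinate isClosed_univ _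
    (fun i => hopen (a i)) (by rw [← hcover, biUnion_range])
  obtain ⟨Λ', hΛ'⟩ := exists_isSteering_patchDomain (ρ := ρ) fun i => hΛ (a i)
  refine ⟨_, Λ', hΛ', fun y i hi => ?_⟩
  rw [partialPoint_diag, partialPoint_diag]
  exact hρ i hi

end GlobalSteering

/-! ### Homotopy lifting -/

section HomotopyLifting

variable {Z E V : Type*} [TopologicalSpace Z] [TopologicalSpace E] [PseudoMetricSpace V]

lemma exists_continuous_step_size {D : Set (V × V)} (hD : IsOpen D) (hdiag : ∀ y, (y, y) ∈ D) :
    ∃ τ : C(C(I, V), ℝ), ∀ w, 0 < τ w ∧ ∀ s s' : I, dist s s' ≤ τ w → (w s, w s') ∈ D := by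
  let t (w : C(I, V)) : Set ℝ := {δ | 0 < δ ∧ ∀ s s' : I, dist s s' ≤ δ → (w s, w s') ∈ D}
  refine exists_continuous_forall_mem_convex_of_local_const (t := t) (fun w => ?_) fun w => ?_
  · exact OrdConnected.convex ⟨fun δ hδ δ' hδ' _ hx =>
      ⟨hδ.1.trans_le hx.1, fun s s' h => hδ'.2 s s' (h.trans hx.2)⟩⟩
  · have hnear : ∀ᶠ q : C(I, V) × I × I in 𝓝ˢ ({w} ×ˢ diagonal I), (q.1 q.2.1, q.1 q.2.2) ∈ D := by
      refine (hD.preimage (by fun_prop)).mem_nhdsSet.2 ?_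
      rintro ⟨_, s, s'⟩ ⟨rfl, hs⟩
      obtain rfl : s = s' := hs
      exact hdiag _
    rw [isCompact_singleton.nhdsSet_prod_eq isCompact_diagonal, nhdsSet_singleton,
      nhdsSet_diagonal_eq_uniformity] at hnear
    obtain ⟨p, hp, r, hr, hpr⟩ := eventually_prod_iff.1 hnear
    obtain ⟨δ, hδ, hδr⟩ := Metric.uniformity_basis_dist_le.eventually_iff.1 hr
    exact ⟨δ, hp.mono fun w' hw' => ⟨hδ, fun s s' h => hpr hw' (hδr (x := (s, s')) h)⟩⟩

/-- The time `min s (k * τ)`, as a point of the unit interval. -/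
def cappedTime (τ : ℝ) (k : ℕ) (s : I) : I := projIcc 0 1 zero_le_one (min s (k * τ))

lemma cappedTime_zero_left (τ : ℝ) (s : I) : cappedTime τ 0 s = 0 := by
  rw [cappedTime, Nat.cast_zero, zero_mul]
  exact projIcc_of_le_left _ (min_le_right _ _)

lemma cappedTime_zero_right (τ : ℝ) (k : ℕ) : cappedTime τ k 0 = 0 :=
  projIcc_of_le_left _ (min_le_left _ _)

lemma cappedTime_of_one_le {τ : ℝ} {k : ℕ} (h : 1 ≤ k * τ) (s : I) : cappedTime τ k s = s := by
  rw [cappedTime, min_eq_left (s.2.2.trans h), projIcc_val]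

lemma dist_cappedTime_succ_le {τ : ℝ} (hτ : 0 ≤ τ) (k : ℕ) (s : I) :
    dist (cappedTime τ k s) (cappedTime τ (k + 1) s) ≤ τ := by
  calc dist (cappedTime τ k s) (cappedTime τ (k + 1) s)
      ≤ |min (s : ℝ) (k * τ) - min (s : ℝ) (↑(k + 1) * τ)| := abs_projIcc_sub_projIcc _
    _ ≤ |k * τ - ↑(k + 1) * τ| := by
        simpa using abs_min_sub_min_le_max (s : ℝ) (k * τ) s (↑(k + 1) * τ)
    _ = τ := by
        rw [← sub_mul, Nat.cast_succ, sub_add_cancel_left, neg_one_mul, abs_neg, abs_of_nonneg hτ]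

lemma continuous_cappedTime (k : ℕ) : Continuous fun q : ℝ × I => cappedTime q.1 k q.2 :=
  continuous_projIcc.comp (by fun_prop)

lemma IsSteering.exists_homotopy_lift {F : E → V} {D : Set (V × V)} {Λ : E × V × V → E}
    (hΛ : IsSteering F D Λ) (hdiag : ∀ y, (y, y) ∈ D) {g : Z × I → V} (hg : Continuous g)
    {g₀ : Z → E} (hg₀ : Continuous g₀) (hlift : ∀ z, F (g₀ z) = g (z, 0)) :
    ∃ G : Z × I → E, Continuous G ∧ (∀ z, G (z, 0) = g₀ z) ∧ ∀ z s, F (G (z, s)) = g (z, s) := by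
  obtain ⟨step, hstep⟩ := exists_continuous_step_size hΛ.isOpen hdiag
  let τ (z : Z) : ℝ := step (ContinuousMap.curry ⟨g, hg⟩ z)
  have hτ : Continuous τ := step.continuous.comp (ContinuousMap.curry ⟨g, hg⟩).continuous
  have hτ_pos (z : Z) : 0 < τ z := (hstep _).1
  let c (k : ℕ) (q : Z × I) : V := g (q.1, cappedTime (τ q.1) k q.2)
  have hc (k : ℕ) : Continuous (c k) := hg.comp (continuous_fst.prodMk
    ((continuous_cappedTime k).comp ((hτ.comp continuous_fst).prodMk continuous_snd)))
  have hD (k : ℕ) (q : Z × I) : (c k q, c (k + 1) q) ∈ D :=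
    (hstep (ContinuousMap.curry ⟨g, hg⟩ q.1)).2 _ _
      (dist_cappedTime_succ_le (hτ_pos q.1).le k q.2)
  have hc_eq {N k : ℕ} {q : Z × I} (hN : 1 < N * τ q.1) (hk : N ≤ k) : c k q = g q := by
    have : 1 ≤ k * τ q.1 := hN.le.trans (by gcongr; exact (hτ_pos _).le)
    simp only [c, cappedTime_of_one_le this]
  have hfin : LocallyFinite fun k => {q | c k q ≠ c (k + 1) q} := fun q₀ => by
    obtain ⟨N, hN⟩ := exists_lt_nsmul (hτ_pos q₀.1) 1
    rw [nsmul_eq_mul] at hN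
    refine ⟨{q | 1 < N * τ q.1}, (isOpen_lt continuous_const (by fun_prop)).mem_nhds hN,
      (finite_lt_nat N).subset ?_⟩
    rintro k ⟨q, hne, hq⟩
    by_contra! hk
    exact hne ((hc_eq hq (not_lt.1 hk)).trans (hc_eq hq ((not_lt.1 hk).trans k.le_succ)).symm)
  obtain ⟨G, hG, hG_self, hFG⟩ := exists_limit_steeringChain (fun _ => hΛ) hc
    (fun k q => .inl (hD k q)) hfin (u₀ := fun q => g₀ q.1) (by fun_prop)
  refine ⟨G, hG, fun z => hG_self _ fun k => ?_, fun z s => ?_⟩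
  · simp only [c, cappedTime_zero_right]
  · have h₀ : F (g₀ z) = c 0 (z, s) := by simp only [c, cappedTime_zero_left, hlift]
    obtain ⟨N, hN⟩ := exists_lt_nsmul (hτ_pos z) 1
    rw [nsmul_eq_mul] at hN
    obtain ⟨k, hk, hNk⟩ := ((hFG (z, s) h₀).and (eventually_ge_atTop N)).exists
    exact hk.trans (hc_eq hN hNk)

end HomotopyLifting

/-! ### Uniqueness of trajectories -/

section Gronwall

variable {a b : ℝ} {f k : ℝ → ℝ}

lemma integral_mul_eq_zero_of_le_integral_mul (hab : a ≤ b) (hf₀ : ∀ s, 0 ≤ f s)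
    (hk₀ : ∀ s, 0 ≤ k s) (hk : IntervalIntegrable k volume a b)
    (hkf : IntervalIntegrable (fun s => k s * f s) volume a b) (hk_lt : ∫ s in a..b, k s < 1)
    (h : ∀ t ∈ Icc a b, f t ≤ ∫ s in a..t, k s * f s) : ∫ s in a..b, k s * f s = 0 := by
  have hkf₀ (s : ℝ) : 0 ≤ k s * f s := mul_nonneg (hk₀ s) (hf₀ s)
  have hf_le (t : ℝ) (ht : t ∈ Icc a b) : f t ≤ ∫ s in a..b, k s * f s :=
    (h t ht).trans (intervalIntegral.integral_mono_interval le_rfl ht.1 ht.2 (ae_of_all _ hkf₀) hkf)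
  have hnonneg : 0 ≤ ∫ s in a..b, k s * f s :=
    intervalIntegral.integral_nonneg hab fun s _ => hkf₀ s
  have hle : ∫ s in a..b, k s * f s ≤ (∫ s in a..b, k s) * ∫ s in a..b, k s * f s := by
    rw [← intervalIntegral.integral_mul_const]
    exact intervalIntegral.integral_mono_on hab hkf (hk.mul_const _)
      fun s hs => mul_le_mul_of_nonneg_left (hf_le s hs) (hk₀ s)
  nlinarith

lemma eq_zero_of_le_integral_mul (hf : ContinuousOn f (Icc a b)) (hf₀ : ∀ s, 0 ≤ f s)
    (hk₀ : ∀ s, 0 ≤ k s) (hk : IntegrableOn k (Icc a b))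
    (h : ∀ t ∈ Icc a b, f t ≤ ∫ s in a..t, k s * f s) {t : ℝ} (ht : t ∈ Icc a b) : f t = 0 := by
  have hab : a ≤ b := ht.1.trans ht.2
  have ha : a ∈ Icc a b := left_mem_Icc.2 hab
  have hint {φ : ℝ → ℝ} (hφ : IntegrableOn φ (Icc a b)) {r t : ℝ} (hr : r ∈ Icc a b)
      (ht : t ∈ Icc a b) : IntervalIntegrable φ volume r t :=
    (hφ.mono_set (uIcc_subset_Icc hr ht)).intervalIntegrable
  have hcont {φ : ℝ → ℝ} (hφ : IntegrableOn φ (Icc a b)) {r : ℝ} (hr : r ∈ Icc a b) :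
      ContinuousOn (fun t => ∫ s in r..t, φ s) (Icc a b) := by
    rw [← uIcc_of_le hab] at hr ⊢
    exact intervalIntegral.continuousOn_primitive_interval' (hint hφ ha (right_mem_Icc.2 hab)) hr
  have hkf : IntegrableOn (fun s => k s * f s) (Icc a b) := hk.mul_continuousOn hf isCompact_Icc
  have hzero : Icc a b ⊆ {t | ∫ s in a..t, k s * f s = 0} := by
    refine IsClosed.Icc_subset_of_forall_mem_nhdsWithin ?_ intervalIntegral.integral_same ?_
    · rw [inter_comm]
      exact (hcont hkf ha).preimage_isClosed_of_isClosed isClosed_Icc isClosed_singleton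
    · rintro r ⟨hr₀ : _ = _, hr⟩
      have hrI : r ∈ Icc a b := Ico_subset_Icc_self hr
      have hsplit {t : ℝ} (ht : t ∈ Icc a b) :
          ∫ s in a..t, k s * f s = ∫ s in r..t, k s * f s := by
        rw [← intervalIntegral.integral_add_adjacent_intervals (hint hkf ha hrI)
          (hint hkf hrI ht), hr₀, zero_add]
      have hsmall : ∀ᶠ t in 𝓝[>] r, ∫ s in r..t, k s < 1 := by
        refine ((hcont hk hrI r hrI).mono_left ?_).eventually_lt_const (by simp)
        rw [← nhdsWithin_Ioo_eq_nhdsGT hr.2]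
        exact nhdsWithin_mono _ (Ioo_subset_Icc_self.trans (Icc_subset_Icc_left hr.1))
      filter_upwards [hsmall, Ioo_mem_nhdsGT hr.2] with t ht_lt ht
      have hsub : Icc r t ⊆ Icc a b := Icc_subset_Icc hr.1 ht.2.le
      have htI := hsub (right_mem_Icc.2 ht.1.le)
      exact (hsplit htI).trans (integral_mul_eq_zero_of_le_integral_mul ht.1.le hf₀ hk₀
        (hint hk hrI htI) (hint hkf hrI htI) ht_lt
        fun s hs => (h s (hsub hs)).trans_eq (hsplit (hsub hs)))
  exact le_antisymm ((h t ht).trans_eq (hzero ht)) (hf₀ t)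

end Gronwall

/-- Lebesgue measure on the unit interval. -/
abbrev unitVolume : Measure ℝ := volume.restrict (Icc 0 1)

section Trajectory

variable {n d : ℕ} {X : Fin d → EuclideanSpace ℝ (Fin n) → EuclideanSpace ℝ (Fin n)}
  {x : EuclideanSpace ℝ (Fin n)} {u v : ℝ → EuclideanSpace ℝ (Fin d)}
  {γ γ' : ℝ → EuclideanSpace ℝ (Fin n)}

lemma integrable_sum_smul_comp (hX : ∀ i, Continuous (X i)) (hu : Integrable u unitVolume)
    (hγ : ContinuousOn γ (Icc 0 1)) :
    Integrable (fun s => ∑ i, u s i • X i (γ s)) unitVolume := by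
  refine integrable_finsetSum _ fun i _ => ?_
  have hui : IntegrableOn (fun s => u s i) (Icc (0 : ℝ) 1) :=
    (EuclideanSpace.proj (𝕜 := ℝ) i).integrable_comp hu
  exact hui.smul_continuousOn ((hX i).comp_continuousOn hγ) isCompact_Icc

lemma norm_sum_smul_sub_sum_smul_le {K : NNReal} (hX : ∀ i, LipschitzWith K (X i))
    (w : EuclideanSpace ℝ (Fin d)) (y z : EuclideanSpace ℝ (Fin n)) :
    ‖∑ i, w i • X i y - ∑ i, w i • X i z‖ ≤ d * K * ‖w‖ * ‖y - z‖ := by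
  rw [← Finset.sum_sub_distrib]
  calc ‖∑ i, (w i • X i y - w i • X i z)‖
      ≤ ∑ i, ‖w i‖ * ‖X i y - X i z‖ := by
        refine norm_sum_le_of_le _ fun i _ => ?_
        rw [← smul_sub, norm_smul]
    _ ≤ ∑ _i : Fin d, ‖w‖ * (K * ‖y - z‖) := by
        gcongr with i
        · exact PiLp.norm_apply_le w i
        · exact (hX i).norm_sub_le y z
    _ = d * K * ‖w‖ * ‖y - z‖ := by
        rw [Finset.sum_const, Finset.card_fin, nsmul_eq_mul]
        ring

namespace IsTrajectory

lemma congr_ae (h : IsTrajectory X x u γ) (huv : u =ᵐ[unitVolume] v) : IsTrajectory X x v γ := by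
  refine ⟨h.1, fun t ht => ?_⟩
  rw [h.2 t ht, intervalIntegral.integral_congr_ae]
  filter_upwards [(ae_restrict_iff' measurableSet_Icc).1 huv] with s hs hst
  rw [uIoc_of_le ht.1] at hst
  rw [hs ⟨hst.1.le, hst.2.trans ht.2⟩]

lemma eqOn {K : NNReal} (hX : ∀ i, LipschitzWith K (X i)) (hu : Integrable u unitVolume)
    (h : IsTrajectory X x u γ) (h' : IsTrajectory X x u γ') : EqOn γ γ' (Icc 0 1) := by
  intro t ht
  have hint {γ : ℝ → EuclideanSpace ℝ (Fin n)} (h : IsTrajectory X x u γ) {t : ℝ}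
      (ht : t ∈ Icc (0 : ℝ) 1) :
      IntervalIntegrable (fun s => ∑ i, u s i • X i (γ s)) volume 0 t :=
    (IntegrableOn.mono_set (integrable_sum_smul_comp (fun i => (hX i).continuous) hu h.1)
      (uIcc_subset_Icc (left_mem_Icc.2 zero_le_one) ht)).intervalIntegrable
  have hk : IntegrableOn (fun s => d * K * ‖u s‖) (Icc 0 1) := hu.norm.const_mul _
  have hdist : ContinuousOn (fun s => ‖γ s - γ' s‖) (Icc 0 1) := (h.1.sub h'.1).norm
  refine sub_eq_zero.1 (norm_eq_zero.1 (eq_zero_of_le_integral_mul hdist (fun s => norm_nonneg _)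
    (fun s => by positivity) hk (fun t ht => ?_) ht))
  have hmaj : IntervalIntegrable (fun s => d * K * ‖u s‖ * ‖γ s - γ' s‖) volume 0 t :=
    (IntegrableOn.mono_set (hk.mul_continuousOn hdist isCompact_Icc)
      (uIcc_subset_Icc (left_mem_Icc.2 zero_le_one) ht)).intervalIntegrable
  rw [h.2 t ht, h'.2 t ht, add_sub_add_left_eq_sub,
    ← intervalIntegral.integral_sub (hint h ht) (hint h' ht)]
  exact intervalIntegral.norm_integral_le_of_norm_le ht.1
    (ae_of_all _ fun s _ => norm_sum_smul_sub_sum_smul_le hX (u s) _ _) hmaj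

end IsTrajectory

end Trajectory

/-! ### Appending a constant control -/

section AppendConst

lemma tendsto_eLpNorm_zero_of_dominated {α ι B : Type*} {mα : MeasurableSpace α} {μ : Measure α}
    [NormedAddCommGroup B] {p : ENNReal} (hp₀ : p ≠ 0) (hp : p ≠ ⊤) {l : Filter ι}
    [l.IsCountablyGenerated] {f : ι → α → B} {G : α → ℝ} (hf : ∀ i, AEStronglyMeasurable (f i) μ)
    (hG : MemLp G p μ) (hfG : ∀ᶠ i in l, ∀ᵐ t ∂μ, ‖f i t‖ ≤ G t)
    (hlim : ∀ᵐ t ∂μ, Tendsto (fun i => f i t) l (𝓝 0)) :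
    Tendsto (fun i => eLpNorm (f i) p μ) l (𝓝 0) := by
  have hp_pos : 0 < p.toReal := ENNReal.toReal_pos hp₀ hp
  have hpow {q : ℝ} (hq : 0 < q) {w : ι → ENNReal} (hw : Tendsto w l (𝓝 0)) :
      Tendsto (fun i => w i ^ q) l (𝓝 0) := by
    simpa only [ENNReal.zero_rpow_of_pos hq] using hw.ennrpow_const q
  have hlint : Tendsto (fun i => ∫⁻ t, ‖f i t‖ₑ ^ p.toReal ∂μ) l (𝓝 0) := by
    rw [← lintegral_zero (μ := μ)]
    refine tendsto_lintegral_filter_of_dominated_convergence' (fun t => ‖G t‖ₑ ^ p.toReal)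
      (.of_forall fun i => (hf i).enorm.pow_const _) ?_
      (lintegral_rpow_enorm_lt_top_of_eLpNorm_lt_top hp₀ hp hG.2).ne ?_
    · filter_upwards [hfG] with i hi
      filter_upwards [hi] with t ht
      gcongr
      exact enorm_le_iff_norm_le.2 (ht.trans (le_abs_self _))
    · filter_upwards [hlim] with t ht
      exact hpow hp_pos (by simpa using ht.enorm)
  simp only [eLpNorm_eq_lintegral_rpow_enorm_toReal hp₀ hp]
  exact hpow (by positivity) hlint

lemma map_mul_restrict_Iic_le {c : ℝ} (hc : 1 ≤ c) :
    (unitVolume.map (c * ·)).restrict (Iic 1) ≤ unitVolume := by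
  have hmeas : Measurable (c * ·) := measurable_const_mul c
  have hc_pos : 0 < c := one_pos.trans_le hc
  refine Measure.le_iff.2 fun s hs => ?_
  rw [Measure.restrict_apply hs, Measure.map_apply hmeas (hs.inter measurableSet_Iic),
    Measure.restrict_apply (hmeas (hs.inter measurableSet_Iic)), Measure.restrict_apply hs]
  calc volume ((c * ·) ⁻¹' (s ∩ Iic 1) ∩ Icc 0 1)
      ≤ volume ((c * ·) ⁻¹' (s ∩ Icc 0 1)) :=
        measure_mono fun t ht => ⟨ht.1.1, mul_nonneg hc_pos.le ht.2.1, ht.1.2⟩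
    _ = ENNReal.ofReal |c⁻¹| * volume (s ∩ Icc 0 1) := Real.volume_preimage_mul_left hc_pos.ne' _
    _ ≤ volume (s ∩ Icc 0 1) := by
        refine mul_le_of_le_one_left' (ENNReal.ofReal_le_one.2 ?_)
        rw [abs_of_pos (inv_pos.2 hc_pos)]
        exact inv_le_one_of_one_le₀ hc

variable {B : Type*}

/-- The control that runs through `u` on `[0, 1]` and then through the constant `v` for a time `δ`,
compressed to the unit interval. The values are not rescaled: it is `(1 + δ) • appendConst u v δ`
that steers along the same path as `u` followed by `v`. -/
def appendConst (u : ℝ → B) (v : B) (δ : NNReal) (t : ℝ) : B :=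
  if (1 + δ) * t ≤ 1 then u ((1 + δ) * t) else v

lemma appendConst_of_le {u : ℝ → B} {v : B} {δ : NNReal} {t : ℝ} (ht : (1 + δ) * t ≤ 1) :
    appendConst u v δ t = u ((1 + δ) * t) := if_pos ht

lemma appendConst_of_lt {u : ℝ → B} {v : B} {δ : NNReal} {t : ℝ} (ht : 1 < (1 + δ) * t) :
    appendConst u v δ t = v := if_neg ht.not_ge

lemma appendConst_zero (u : ℝ → B) (v : B) : EqOn (appendConst u v 0) u (Icc 0 1) := fun t ht => by
  simp [appendConst, ht.2]

variable [NormedAddCommGroup B] {p : ENNReal}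

lemma memLp_appendConst {u : ℝ → B} (hu : MemLp u p unitVolume) (v : B) (δ : NNReal) :
    MemLp (appendConst u v δ) p unitVolume := by
  have hδ : (1 : ℝ) ≤ 1 + δ := by simp
  refine MemLp.comp_of_map (MemLp.piecewise measurableSet_Iic
    (hu.mono_measure (map_mul_restrict_Iic_le hδ)) (memLp_const v))
    (measurable_const_mul _).aemeasurable

lemma eLpNorm_appendConst_sub_le {u u' : ℝ → B} (hu : MemLp u p unitVolume)
    (hu' : MemLp u' p unitVolume) (v : B) (δ : NNReal) :
    eLpNorm (appendConst u v δ - appendConst u' v δ) p unitVolume ≤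
      eLpNorm (u - u') p unitVolume := by
  have hδ : (1 : ℝ) ≤ 1 + δ := by simp
  have hle := map_mul_restrict_Iic_le hδ
  have hsub : appendConst u v δ - appendConst u' v δ =
      (Iic 1).indicator (u - u') ∘ ((1 + δ : ℝ) * ·) := by
    ext t
    by_cases ht : (1 + δ) * t ≤ 1 <;> simp [appendConst, ht]
  have hmeas : AEStronglyMeasurable ((Iic 1).indicator (u - u'))
      (unitVolume.map ((1 + δ : ℝ) * ·)) :=
    (aestronglyMeasurable_indicator_iff measurableSet_Iic).2 ((hu.1.sub hu'.1).mono_measure hle)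
  rw [hsub, ← eLpNorm_map_measure hmeas (measurable_const_mul _).aemeasurable,
    eLpNorm_indicator_eq_eLpNorm_restrict measurableSet_Iic]
  exact eLpNorm_mono_measure _ hle

lemma norm_appendConst_le {u : ℝ → B} {M : ℝ} (hM : ∀ t, ‖u t‖ ≤ M) (v : B) (δ : NNReal) (t : ℝ) :
    ‖appendConst u v δ t‖ ≤ M + ‖v‖ := by
  rcases le_or_gt ((1 + δ) * t) 1 with ht | ht
  · rw [appendConst_of_le ht]
    exact (hM _).trans (le_add_of_nonneg_right (norm_nonneg v))
  · rw [appendConst_of_lt ht]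
    exact le_add_of_nonneg_left ((norm_nonneg _).trans (hM 0))

lemma continuousAt_appendConst {u : ℝ → B} (hu : Continuous u) {q : B × NNReal} {t : ℝ}
    (ht : (1 + q.2) * t ≠ 1) : ContinuousAt (fun q : B × NNReal => appendConst u q.1 q.2 t) q := by
  have hmul : Continuous fun q : B × NNReal => (1 + q.2 : ℝ) * t := by fun_prop
  rcases ht.lt_or_gt with h | h
  · refine (hu.comp hmul).continuousAt.congr ?_
    filter_upwards [hmul.continuousAt.eventually_lt_const h] with q' hq'
    exact (appendConst_of_le hq'.le).symm
  · refine continuousAt_fst.congr ?_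
    filter_upwards [hmul.continuousAt.eventually_const_lt h] with q' hq'
    exact (appendConst_of_lt hq').symm

/-- The operation `appendConst` on controls in `L^p`. -/
def appendConstLp (q : Lp B p unitVolume × B × NNReal) : Lp B p unitVolume :=
  (memLp_appendConst (Lp.memLp q.1) q.2.1 q.2.2).toLp _

lemma coeFn_appendConstLp (u : Lp B p unitVolume) (v : B) (δ : NNReal) :
    appendConstLp (u, v, δ) =ᵐ[unitVolume] appendConst u v δ := MemLp.coeFn_toLp _

lemma appendConstLp_zero (u : Lp B p unitVolume) (v : B) : appendConstLp (u, v, 0) = u := by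
  refine Lp.ext ((coeFn_appendConstLp u v 0).trans ?_)
  filter_upwards [ae_restrict_mem measurableSet_Icc] with t ht using appendConst_zero u v ht

lemma appendConstLp_ae_eq_of_ae_eq {f : Lp B p unitVolume} {u : ℝ → B} (hf : f =ᵐ[unitVolume] u)
    (hp₀ : p ≠ 0) (v : B) (δ : NNReal) :
    appendConstLp (f, v, δ) =ᵐ[unitVolume] appendConst u v δ := by
  have hu : MemLp u p unitVolume := (Lp.memLp f).ae_eq hf
  have hzero : eLpNorm (appendConst f v δ - appendConst u v δ) p unitVolume = 0 := by
    refine le_antisymm ((eLpNorm_appendConst_sub_le (Lp.memLp f) hu v δ).trans_eq ?_) zero_le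
    rw [eLpNorm_congr_ae (hf.sub_eq), eLpNorm_zero]
  rw [eLpNorm_eq_zero_iff ((memLp_appendConst (Lp.memLp f) v δ).sub (memLp_appendConst hu v δ)).1
    hp₀] at hzero
  exact (coeFn_appendConstLp f v δ).trans (hzero.mono fun t ht => sub_eq_zero.1 ht)

variable [Fact (1 ≤ p)]

lemma continuous_appendConstLp_of_ae_eq (hp : p ≠ ⊤) {f : Lp B p unitVolume}
    (u : BoundedContinuousFunction ℝ B) (hf : f =ᵐ[unitVolume] u) :
    Continuous fun q : B × NNReal => appendConstLp (f, q) := by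
  have hp₀ : p ≠ 0 := (one_pos.trans_le (Fact.out : 1 ≤ p)).ne'
  have hu : MemLp u p unitVolume := (Lp.memLp f).ae_eq hf
  have hmeas (q : B × NNReal) := (memLp_appendConst hu q.1 q.2).1
  refine continuous_iff_continuousAt.2 fun q₀ => ?_
  rw [ContinuousAt, Lp.tendsto_Lp_iff_tendsto_eLpNorm']
  have hcongr (q : B × NNReal) :
      eLpNorm (⇑(appendConstLp (f, q)) - ⇑(appendConstLp (f, q₀))) p unitVolume =
        eLpNorm (appendConst u q.1 q.2 - appendConst u q₀.1 q₀.2) p unitVolume :=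
    eLpNorm_congr_ae ((appendConstLp_ae_eq_of_ae_eq hf hp₀ q.1 q.2).sub
      (appendConstLp_ae_eq_of_ae_eq hf hp₀ q₀.1 q₀.2))
  simp only [hcongr]
  refine tendsto_eLpNorm_zero_of_dominated hp₀ hp (fun q => (hmeas q).sub (hmeas q₀))
    (memLp_const (‖u‖ + (‖q₀.1‖ + 1) + (‖u‖ + ‖q₀.1‖))) ?_ ?_
  · filter_upwards [(continuous_fst (X := B)).norm.continuousAt.eventually_lt_const
      (lt_add_one ‖q₀.1‖)] with q hq
    refine ae_of_all _ fun t => (norm_sub_le _ _).trans (add_le_add ?_ ?_)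
    · exact (norm_appendConst_le u.norm_coe_le_norm _ _ t).trans (by gcongr)
    · exact norm_appendConst_le u.norm_coe_le_norm _ _ t
  · have hne : ∀ᵐ t ∂unitVolume, t ≠ (1 + q₀.2 : ℝ)⁻¹ := Measure.ae_ne _ _
    filter_upwards [hne] with t ht
    have hcont := continuousAt_appendConst u.continuous (q := q₀) (t := t)
      fun h => ht (eq_inv_of_mul_eq_one_right h)
    simpa using hcont.tendsto.sub_const (appendConst u q₀.1 q₀.2 t)

lemma continuous_appendConstLp [NormedSpace ℝ B] (hp : p ≠ ⊤) :
    Continuous (appendConstLp (B := B) (p := p)) := by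
  refine continuous_prod_of_dense_continuous_lipschitzWith _ 1
    (BoundedContinuousFunction.toLp_denseRange B unitVolume ℝ hp) ?_ ?_
  · rintro _ ⟨u, rfl⟩
    exact continuous_appendConstLp_of_ae_eq hp u (BoundedContinuousFunction.coeFn_toLp ..)
  · intro q f f'
    dsimp only [appendConstLp]
    rw [Lp.edist_toLp_toLp, Lp.edist_def, ENNReal.coe_one, one_mul]
    exact eLpNorm_appendConst_sub_le (Lp.memLp f) (Lp.memLp f') q.1 q.2

end AppendConst

/-! ### Trajectories of appended controls -/

lemma ite_eq_add_integral_ite {V : Type*} [NormedAddCommGroup V] [NormedSpace ℝ V]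
    {x : V} {γ φ b b' : ℝ → V} {t₀ c t : ℝ} (hb : IntervalIntegrable b volume t₀ c)
    (hb' : Continuous b') (hγ : ∀ t ∈ Icc t₀ c, γ t = x + ∫ s in t₀..t, b s)
    (hφ : c ≤ t → φ t = γ c + ∫ s in c..t, b' s) (ht : t₀ ≤ t) (hc : t₀ ≤ c) :
    (if t ≤ c then γ t else φ t) = x + ∫ s in t₀..t, if s ≤ c then b s else b' s := by
  have hleft {r : ℝ} (hr : r ≤ c) (hr₀ : t₀ ≤ r) :
      EqOn b (fun s => if s ≤ c then b s else b' s) (uIcc t₀ r) := fun s hs =>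
    (if_pos ((uIcc_of_le hr₀ ▸ hs).2.trans hr)).symm
  rcases le_or_gt t c with h | h
  · rw [if_pos h, hγ t ⟨ht, h⟩, intervalIntegral.integral_congr (hleft h ht)]
  have hright : EqOn b' (fun s => if s ≤ c then b s else b' s) (uIoc c t) := fun s hs =>
    (if_neg (uIoc_of_le h.le ▸ hs).1.not_ge).symm
  rw [if_neg h.not_ge, hφ h.le, hγ c ⟨hc, le_rfl⟩, add_assoc,
    intervalIntegral.integral_congr (hleft le_rfl hc),
    intervalIntegral.integral_congr_ae (ae_of_all _ fun s => @hright s),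
    intervalIntegral.integral_add_adjacent_intervals
      (hb.congr ((hleft le_rfl hc).mono uIoc_subset_uIcc))
      ((hb'.intervalIntegrable c t).congr hright)]

lemma eq_add_integral_of_isFixedPt_picardMap {V : Type*} [NormedAddCommGroup V] [NormedSpace ℝ V]
    {f : C(V, V)} {δ r c : ℝ} {y : V} {Γ : C(I, V)} (hδ : 0 < δ)
    (hΓ : Function.IsFixedPt (picardMap f (δ * r) y) Γ) {t : ℝ} (ht : t ∈ Icc c (c + δ)) :
    IccExtend zero_le_one Γ ((t - c) / δ) =
      y + ∫ s in c..t, r • f (IccExtend zero_le_one Γ ((s - c) / δ)) := by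
  have hmem : (t - c) / δ ∈ I :=
    ⟨div_nonneg (sub_nonneg.2 ht.1) hδ.le, (div_le_one hδ).2 (sub_le_iff_le_add'.2 ht.2)⟩
  rw [IccExtend_of_mem _ _ hmem]
  conv_lhs => rw [← hΓ.eq, picardMap_apply]
  simp only [sub_div]
  rw [intervalIntegral.integral_smul,
    intervalIntegral.integral_comp_div_sub (fun s => f (IccExtend zero_le_one Γ s)) hδ.ne',
    sub_self, smul_smul, mul_comm]

namespace IsTrajectory

variable {n d : ℕ} {X : Fin d → EuclideanSpace ℝ (Fin n) → EuclideanSpace ℝ (Fin n)}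
  {x : EuclideanSpace ℝ (Fin n)} {u : ℝ → EuclideanSpace ℝ (Fin d)}
  {γ : ℝ → EuclideanSpace ℝ (Fin n)}

lemma of_comp_mul_left {c : ℝ} (hc : 0 ≤ c) {w : ℝ → EuclideanSpace ℝ (Fin d)}
    {η : ℝ → EuclideanSpace ℝ (Fin n)} (hη : ContinuousOn η (Icc 0 c))
    (h : ∀ t ∈ Icc 0 c, η t = x + ∫ s in (0 : ℝ)..t, ∑ i, w s i • X i (η s)) :
    IsTrajectory X x (fun t => c • w (c * t)) (fun t => η (c * t)) := by
  have hmem {t : ℝ} (ht : t ∈ Icc (0 : ℝ) 1) : c * t ∈ Icc 0 c :=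
    ⟨mul_nonneg hc ht.1, mul_le_of_le_one_right hc ht.2⟩
  refine ⟨hη.comp (by fun_prop) fun t ht => hmem ht, fun t ht => ?_⟩
  simp only [PiLp.smul_apply, smul_assoc, ← Finset.smul_sum]
  rw [h _ (hmem ht), intervalIntegral.integral_smul,
    intervalIntegral.smul_integral_comp_mul_left (fun s => ∑ i, w s i • X i (η s)), mul_zero]

lemma exists_append (hX : ∀ i, Continuous (X i)) (hu : Integrable u unitVolume)
    (hγ : IsTrajectory X x u γ) {v : EuclideanSpace ℝ (Fin d)} {δ : NNReal} (hδ : 0 < δ) {r : ℝ}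
    {f : C(EuclideanSpace ℝ (Fin n), EuclideanSpace ℝ (Fin n))}
    (hf : ∀ y, ∑ i, v i • X i y = r • f y) {Γ : C(I, EuclideanSpace ℝ (Fin n))}
    (hΓ : Function.IsFixedPt (picardMap f (δ * r) (γ 1)) Γ) :
    ∃ η, IsTrajectory X x (fun t => (1 + δ : ℝ) • appendConst u v δ t) η ∧ η 1 = Γ 1 := by
  let w (s : ℝ) : EuclideanSpace ℝ (Fin d) := if s ≤ 1 then u s else v
  let φ (s : ℝ) : EuclideanSpace ℝ (Fin n) := IccExtend zero_le_one Γ ((s - 1) / δ)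
  let η (s : ℝ) : EuclideanSpace ℝ (Fin n) := if s ≤ 1 then γ s else φ s
  have hφ {t : ℝ} (ht : t ∈ Icc 1 (1 + δ : ℝ)) : φ t = γ 1 + ∫ s in (1 : ℝ)..t, r • f (φ s) :=
    eq_add_integral_of_isFixedPt_picardMap (NNReal.coe_pos.2 hδ) hΓ ht
  have hη_le {s : ℝ} (hs : s ≤ 1) : η s = γ s := if_pos hs
  have hη_ge {s : ℝ} (hs : 1 ≤ s) : η s = φ s := by
    rcases hs.eq_or_lt with rfl | hs
    · rw [hη_le le_rfl, hφ ⟨le_rfl, by simp⟩, intervalIntegral.integral_same, add_zero]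
    · exact if_neg hs.not_ge
  have hφ_cont : Continuous φ := Γ.continuous.Icc_extend'.comp (by fun_prop)
  have hη : ContinuousOn η (Icc 0 (1 + δ)) := by
    rw [← Icc_union_Icc_eq_Icc zero_le_one (by simp)]
    exact (hγ.1.congr fun s hs => hη_le hs.2).union_of_isClosed
      (hφ_cont.continuousOn.congr fun s hs => hη_ge hs.1) isClosed_Icc isClosed_Icc
  have hη_eq (t : ℝ) (ht : t ∈ Icc 0 (1 + δ : ℝ)) :
      η t = x + ∫ s in (0 : ℝ)..t, ∑ i, w s i • X i (η s) := by
    have hb (s : ℝ) : ∑ i, w s i • X i (η s) =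
        if s ≤ 1 then ∑ i, u s i • X i (γ s) else r • f (φ s) := by
      by_cases hs : s ≤ 1 <;> simp [w, η, hs, hf]
    simp only [hb]
    refine ite_eq_add_integral_ite ?_ (by fun_prop) hγ.2 (fun h => hφ ⟨h, ht.2⟩) ht.1 zero_le_one
    exact (intervalIntegrable_iff_integrableOn_Icc_of_le zero_le_one).2
      (integrable_sum_smul_comp hX hu hγ.1)
  refine ⟨_, of_comp_mul_left (w := w) (by positivity) hη hη_eq, ?_⟩
  rw [mul_one, hη_ge (by simp)]
  simp [φ, hδ.ne']

end IsTrajectory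

/-! ### The endpoint map -/

section EndpointMap

variable {n d : ℕ} {X : Fin d → EuclideanSpace ℝ (Fin n) → EuclideanSpace ℝ (Fin n)}
  {x : EuclideanSpace ℝ (Fin n)} {p : ENNReal}
  {F : Lp (EuclideanSpace ℝ (Fin d)) p unitVolume → EuclideanSpace ℝ (Fin n)}

/-- `F` is the endpoint map of the family `X` from the initial point `x`. -/
def IsEndpointMap (X : Fin d → EuclideanSpace ℝ (Fin n) → EuclideanSpace ℝ (Fin n))
    (x : EuclideanSpace ℝ (Fin n))
    (F : Lp (EuclideanSpace ℝ (Fin d)) p unitVolume → EuclideanSpace ℝ (Fin n)) : Prop :=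
  ∀ u : Lp (EuclideanSpace ℝ (Fin d)) p unitVolume, ∃ γ, IsTrajectory X x u γ ∧ F u = γ 1

namespace IsEndpointMap

variable [Fact (1 ≤ p)] {K : NNReal}

lemma eq_apply_one (hF : IsEndpointMap X x F) (hX : ∀ i, LipschitzWith K (X i))
    {u : Lp (EuclideanSpace ℝ (Fin d)) p unitVolume} {γ : ℝ → EuclideanSpace ℝ (Fin n)}
    (hγ : IsTrajectory X x u γ) : F u = γ 1 := by
  obtain ⟨γ', hγ', hFγ'⟩ := hF u
  rw [hFγ', hγ'.eqOn hX ((Lp.memLp u).integrable Fact.out) hγ ⟨zero_le_one, le_rfl⟩]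

lemma apply_smul_appendConstLp (hF : IsEndpointMap X x F) (hX : ∀ i, LipschitzWith K (X i))
    (u : Lp (EuclideanSpace ℝ (Fin d)) p unitVolume) {v : EuclideanSpace ℝ (Fin d)} {δ : NNReal}
    (hδ : 0 < δ) {r : ℝ} {f : C(EuclideanSpace ℝ (Fin n), EuclideanSpace ℝ (Fin n))}
    (hf : ∀ y, ∑ i, v i • X i y = r • f y) {Γ : C(I, EuclideanSpace ℝ (Fin n))}
    (hΓ : Function.IsFixedPt (picardMap f (δ * r) (F u)) Γ) :
    F ((1 + δ : ℝ) • appendConstLp (u, v, δ)) = Γ 1 := by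
  obtain ⟨γ, hγ, hFγ⟩ := hF u
  rw [hFγ] at hΓ
  obtain ⟨η, hη, hηΓ⟩ := hγ.exists_append (fun i => (hX i).continuous)
    ((Lp.memLp u).integrable Fact.out) hδ hf hΓ
  rw [← hηΓ]
  refine hF.eq_apply_one hX (hη.congr_ae ?_)
  filter_upwards [Lp.coeFn_smul (1 + δ : ℝ) (appendConstLp (u, v, δ)),
    coeFn_appendConstLp u v δ] with t ht ht'
  rw [ht, Pi.smul_apply, ht']

-- The field is followed for time `s ^ 2` at speed `s * m s`: both the appended time and the
-- appended control vary continuously, and the total displacement has order `3`.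
lemma isLiftable_flow (hF : IsEndpointMap X x F) (hp : p ≠ ⊤) (hX : ∀ i, LipschitzWith K (X i))
    {i : Fin d} {f : C(EuclideanSpace ℝ (Fin n), EuclideanSpace ℝ (Fin n))} (hf : ⇑f = X i)
    {m : ℝ → ℝ} (hm : Continuous m)
    {Γ : ℝ × EuclideanSpace ℝ (Fin n) → C(I, EuclideanSpace ℝ (Fin n))}
    (hΓ : ∀ q, Function.IsFixedPt (picardMap f (q.1 ^ 3 * m q.1) q.2) (Γ q)) :
    IsLiftable F fun q => Γ q 1 := by
  let v (s : ℝ) : EuclideanSpace ℝ (Fin d) := (s * m s) • EuclideanSpace.single i 1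
  have hcont := continuous_appendConstLp (B := EuclideanSpace ℝ (Fin d)) hp
  have hS₀ (u : Lp (EuclideanSpace ℝ (Fin d)) p unitVolume) :
      (1 + (‖(0 : ℝ)‖₊ ^ 2 : NNReal) : ℝ) • appendConstLp (u, v 0, ‖(0 : ℝ)‖₊ ^ 2) = u := by
    simp [appendConstLp_zero]
  refine ⟨fun q => (1 + (‖q.2‖₊ ^ 2 : NNReal) : ℝ) • appendConstLp (q.1, v q.2, ‖q.2‖₊ ^ 2),
    by fun_prop, hS₀, fun u s => ?_⟩
  rcases eq_or_ne s 0 with rfl | hs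
  · dsimp only
    rw [hS₀, ← (hΓ (0, F u)).eq, picardMap_apply]
    simp
  · have hdispl : ((‖s‖₊ ^ 2 : NNReal) : ℝ) * (s * m s) = s ^ 3 * m s := by
      rw [NNReal.coe_pow, coe_nnnorm, Real.norm_eq_abs, sq_abs]
      ring
    exact hF.apply_smul_appendConstLp hX u (pow_pos (nnnorm_pos.2 hs) 2)
      (fun y => by simp [v, hf]) (hdispl ▸ hΓ (s, F u))

lemma isLiftableField (hF : IsEndpointMap X x F) (hp : p ≠ ⊤) (hX : ∀ i, LipschitzWith K (X i))
    (hXsmooth : ∀ i, ContDiff ℝ ∞ (X i)) (i : Fin d) : IsLiftableField F (X i) := by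
  let f : C(EuclideanSpace ℝ (Fin n), EuclideanSpace ℝ (Fin n)) := ⟨X i, (hX i).continuous⟩
  obtain ⟨m, hm, hm₀, hm_even, hmK⟩ := exists_bounded_time_change K
  obtain ⟨Γ, hΓ, hΓfix⟩ := exists_contDiff_isFixedPt_picardMap (X := f) (hXsmooth i) (hX i)
    (a := fun s => s ^ 3 * m s) (by fun_prop) hmK
  have hΓlift := hF.isLiftable_flow hp hX (i := i) rfl hm.continuous hΓfix
  exact ⟨3, _, _, hasLeadingField_flow (X := f) (hXsmooth i) (hX i) three_ne_zero hm hm₀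
    (fun s => by rw [hm_even]; ring) hmK hΓ hΓfix, hΓlift, hΓlift.reparam continuous_neg neg_zero⟩

lemma isLiftableField_of_isIteratedBracket (hF : IsEndpointMap X x F) (hp : p ≠ ⊤)
    (hX : ∀ i, LipschitzWith K (X i)) (hXsmooth : ∀ i, ContDiff ℝ ∞ (X i))
    {Y : EuclideanSpace ℝ (Fin n) → EuclideanSpace ℝ (Fin n)} (hY : IsIteratedBracket X Y) :
    IsLiftableField F Y := by
  induction hY with
  | base i => exact hF.isLiftableField hp hX hXsmooth i
  | bracket Y Z _ _ hY hZ => exact hY.lieBracket hZ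

end IsEndpointMap

end EndpointMap

theorem stmt15_general {n d : ℕ} {p : ENNReal} [Fact (1 ≤ p)] (hp : p ≠ ⊤)
    (x : EuclideanSpace ℝ (Fin n))
    (X : Fin d → EuclideanSpace ℝ (Fin n) → EuclideanSpace ℝ (Fin n))
    (hXsmooth : ∀ i, ContDiff ℝ ∞ (X i))
    (hXder : ∃ C, ∀ i y, ‖fderiv ℝ (X i) y‖ ≤ C)
    (hbg : BracketGenerating X)
    (F : Lp (EuclideanSpace ℝ (Fin d)) p unitVolume → EuclideanSpace ℝ (Fin n))
    (hF : IsEndpointMap X x F)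
    (Z : Type*) [TopologicalSpace Z]
    (g : Z × I → EuclideanSpace ℝ (Fin n)) (hg : Continuous g)
    (g₀ : Z → Lp (EuclideanSpace ℝ (Fin d)) p unitVolume) (hg₀ : Continuous g₀)
    (hlift : ∀ z, F (g₀ z) = g (z, 0)) :
    ∃ gt : Z × I → Lp (EuclideanSpace ℝ (Fin d)) p unitVolume,
      Continuous gt ∧ (∀ z, gt (z, 0) = g₀ z) ∧ ∀ z s, F (gt (z, s)) = g (z, s) := by
  obtain ⟨C, hC⟩ := hXder
  have hX (i : Fin d) : LipschitzWith C.toNNReal (X i) :=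
    lipschitzWith_of_nnnorm_fderiv_le ((hXsmooth i).differentiable (by simp))
      fun y => by simpa using Real.toNNReal_le_toNNReal (hC i y)
  have hspan (y : EuclideanSpace ℝ (Fin n)) :
      Submodule.span ℝ {v | ∃ Y, IsLiftableField F Y ∧ Y y = v} = ⊤ := by
    refine top_unique ((hbg y).ge.trans (Submodule.span_mono ?_))
    rintro v ⟨Y, hY, rfl⟩
    exact ⟨Y, hF.isLiftableField_of_isIteratedBracket hp hX hXsmooth hY, rfl⟩
  obtain ⟨D, Λ, hΛ, hdiag⟩ := exists_isSteering_of_local fun y =>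
    (isAchievable_id_of_span_eq_top (hspan y)).exists_isSteering
  exact hΛ.exists_homotopy_lift hdiag hg hg₀ hlift

end

/-- for a bounded, globally Lipschitz, smooth, bracket-generating
(driftless) family, the endpoint map `F : L^p([0,1],ℝ^d) → ℝⁿ`, `F(u) = γ_u(1)`, is
a Hurewicz fibration: every homotopy into `ℝⁿ` admitting a lift at time `0` lifts. -/
theorem stmt15 (n d : ℕ) (p : ℝ) (hp : 1 ≤ p) [Fact (1 ≤ ENNReal.ofReal p)]
    (x : EuclideanSpace ℝ (Fin n))
    (X : Fin d → EuclideanSpace ℝ (Fin n) → EuclideanSpace ℝ (Fin n))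
    (hXsmooth : ∀ i, ContDiff ℝ (⊤ : ℕ∞) (X i))
    (hXbdd : ∃ C, ∀ i y, ‖X i y‖ ≤ C)
    (hXder : ∃ C, ∀ i y, ‖fderiv ℝ (X i) y‖ ≤ C)
    (hbg : BracketGenerating X)
    (F : Lp (EuclideanSpace ℝ (Fin d)) (ENNReal.ofReal p)
        (volume.restrict (Set.Icc (0:ℝ) 1)) → EuclideanSpace ℝ (Fin n))
    (hF : ∀ u : Lp (EuclideanSpace ℝ (Fin d)) (ENNReal.ofReal p)
        (volume.restrict (Set.Icc (0:ℝ) 1)),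
      ∃ γ, IsTrajectory X x (⇑u) γ ∧ F u = γ 1)
    (Z : Type*) [TopologicalSpace Z]
    (g : Z × unitInterval → EuclideanSpace ℝ (Fin n)) (hg : Continuous g)
    (g₀ : Z → Lp (EuclideanSpace ℝ (Fin d)) (ENNReal.ofReal p)
      (volume.restrict (Set.Icc (0:ℝ) 1)))
    (hg₀ : Continuous g₀)
    (hlift : ∀ z, F (g₀ z) = g (z, 0)) :
    ∃ gt : Z × unitInterval → Lp (EuclideanSpace ℝ (Fin d)) (ENNReal.ofReal p)
        (volume.restrict (Set.Icc (0:ℝ) 1)),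
      Continuous gt ∧ (∀ z, gt (z, 0) = g₀ z) ∧
        ∀ z s, F (gt (z, s)) = g (z, s) :=
  stmt15_general ENNReal.ofReal_ne_top x X hXsmooth hXder hbg F hF Z g hg g₀ hg₀ hlift
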